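/- arXiv:0810.3374 — 2 statements merged into one kernel-verified Lean document; each statement's English description precedes it below -/
import Mathlib

section
/- Let m be an integer. There exists an integer n with n ≠ m and n ≠ −m−3 such that L_n = L_m if and only if there exists a pair (x,y) ∈ ℤ² with xy(x+y) ≠ 0 such that λ := F_m(x,y) is positive and divides m²+3m+9. Moreover, such an integer n and such a solution (x,y) can be chosen so that N = m + (m²+3m+9)·x·y·(x+y)/F_m(x,y), where either N = n or N = −n−3, and this equation holds for exactly one of the two values n and −n−3. -/
open Polynomial

/-- The cubic form `F_m(X,Y) = X³ − mX²Y − (m+3)XY² − Y³`. -/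
def F (m x y : ℤ) : ℤ := x ^ 3 - m * x ^ 2 * y - (m + 3) * x * y ^ 2 - y ^ 3

/-- The simplest cubic polynomial `f_m(X) = X³ − mX² − (m+3)X − 1` over `ℚ`. -/
noncomputable def f (m : ℤ) : ℚ[X] :=
  X ^ 3 - C (m : ℚ) * X ^ 2 - C ((m : ℚ) + 3) * X - 1

/-- The simplest cubic field `L_m`: the splitting field of `f_m` over `ℚ` inside a fixed
algebraic closure of `ℚ`. -/
noncomputable def L (m : ℤ) : IntermediateField ℚ (AlgebraicClosure ℚ) :=
  IntermediateField.adjoin ℚ ((f m).rootSet (AlgebraicClosure ℚ))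

/-!
The roots of `f_m` are permuted cyclically by `θ ↦ -1 / (1 + θ)`, so `L_m = ℚ(θ)` is a cyclic cubic
field. If `w` is a root of `f_n` generating the same field, then, after replacing `w` by the root
`w⁻¹` of `f_{-n-3}` if necessary, the automorphism `θ ↦ -1 / (1 + θ)` also sends `w` to
`-1 / (1 + w)`. The quantity `t = (wθ + w + 1) / (θ - w)` is then Galois invariant, hence rational.
With `t = y / x` in lowest terms this says `w = (yθ - x) / (xθ + x + y)`, and substituting into
`f_N(w) = 0` gives `N = m + (m² + 3m + 9)xy(x + y) / F_m(x, y)`. Since `F_m(x, y)` is coprime to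
`xy(x + y)`, it divides `m² + 3m + 9`.

Conversely, a solution determines an integer `N` by this formula, and the same Möbius map sends `θ`
to a root of `f_N` in `L_m`. That `F_m` has no rational zeros and that `N ≠ -m - 3` both come from
binary cubic forms without nontrivial zeros modulo 2.
-/

open scoped IntermediateField

section CommRing

variable {R S : Type*} [CommRing R] [CommRing S]

/-- The form `F_m(x, y)` with coefficients and arguments in an arbitrary commutative ring; for
integers it is definitionally `F m x y`. -/
def simplestForm (m x y : R) : R := x ^ 3 - m * x ^ 2 * y - (m + 3) * x * y ^ 2 - y ^ 3

/-- `θ` is a root of the simplest cubic polynomial with parameter `m`. -/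
def IsSimplestRoot (m θ : R) : Prop := θ ^ 3 - m * θ ^ 2 - (m + 3) * θ - 1 = 0

/-- The relation `N = m + (m² + 3m + 9)xy(x + y) / F_m(x, y)` between two parameters,
with the denominator cleared. -/
def IsLinked (m N x y : R) : Prop :=
  N * simplestForm m x y = m * simplestForm m x y + (m ^ 2 + 3 * m + 9) * x * y * (x + y)

lemma simplestForm_mul (c m x y : R) :
    simplestForm m (c * x) (c * y) = c ^ 3 * simplestForm m x y := by
  unfold simplestForm; ring

lemma map_simplestForm (φ : R →+* S) (m x y : R) :
    φ (simplestForm m x y) = simplestForm (φ m) (φ x) (φ y) := by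
  simp only [simplestForm, map_sub, map_mul, map_add, map_pow, map_ofNat]

lemma simplestForm_neg (m x y : R) : simplestForm m (-x) (-y) = -simplestForm m x y := by
  unfold simplestForm; ring

lemma isCoprime_simplestForm {x y : R} (m : R) (hxy : IsCoprime x y) :
    IsCoprime (simplestForm m x y) (x * y * (x + y)) := by
  have hx : IsCoprime (simplestForm m x y) x := by
    have h : IsCoprime (-y ^ 3 + x * (x ^ 2 - m * x * y - (m + 3) * y ^ 2)) x :=
      (hxy.symm.pow_left.neg_left).add_mul_left_left _
    convert h using 1; unfold simplestForm; ring
  have hy : IsCoprime (simplestForm m x y) y := by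
    have h : IsCoprime (x ^ 3 + y * (-m * x ^ 2 - (m + 3) * x * y - y ^ 2)) y :=
      hxy.pow_left.add_mul_left_left _
    convert h using 1; unfold simplestForm; ring
  have hadd : IsCoprime (simplestForm m x y) (x + y) := by
    have hx_add : IsCoprime x (x + y) := by
      simpa only [mul_one, add_comm] using hxy.add_mul_left_right 1
    have h : IsCoprime (-x ^ 3 + (x + y) * (2 * x ^ 2 - (m + 2) * x * y - y ^ 2)) (x + y) :=
      (hx_add.pow_left.neg_left).add_mul_left_left _
    convert h using 1; unfold simplestForm; ring
  exact (hx.mul_right hy).mul_right hadd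

lemma IsSimplestRoot.map {m θ : R} (h : IsSimplestRoot m θ) (φ : R →+* S) :
    IsSimplestRoot (φ m) (φ θ) := by
  unfold IsSimplestRoot at *
  simpa only [map_sub, map_mul, map_add, map_pow, map_one, map_ofNat, map_zero]
    using congrArg φ h

lemma isLinked_map_iff {φ : R →+* S} (hφ : Function.Injective φ) {m N x y : R} :
    IsLinked (φ m) (φ N) (φ x) (φ y) ↔ IsLinked m N x y := by
  unfold IsLinked
  rw [← hφ.eq_iff]
  simp only [map_simplestForm, map_mul, map_add, map_pow, map_ofNat]

lemma isLinked_intCast_iff [CharZero R] {m N x y : ℤ} :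
    IsLinked (m : R) N x y ↔ IsLinked m N x y :=
  isLinked_map_iff (Int.castRingHom R).injective_int

lemma IsLinked.dvd {m N x y : R} (h : IsLinked m N x y) (hxy : IsCoprime x y) :
    simplestForm m x y ∣ m ^ 2 + 3 * m + 9 := by
  refine (isCoprime_simplestForm m hxy).dvd_of_dvd_mul_right ⟨N - m, ?_⟩
  unfold IsLinked at h
  linear_combination -h

lemma IsLinked.neg {m N x y : R} (h : IsLinked m N x y) : IsLinked m N (-x) (-y) := by
  unfold IsLinked at *
  rw [simplestForm_neg]
  linear_combination -h

variable [IsDomain R]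

lemma isLinked_mul_iff {c m N x y : R} (hc : c ≠ 0) :
    IsLinked m N (c * x) (c * y) ↔ IsLinked m N x y := by
  have hrhs : m * (c ^ 3 * simplestForm m x y) +
      (m ^ 2 + 3 * m + 9) * (c * x) * (c * y) * (c * x + c * y) =
      c ^ 3 * (m * simplestForm m x y + (m ^ 2 + 3 * m + 9) * x * y * (x + y)) := by ring
  rw [IsLinked, simplestForm_mul, hrhs, mul_left_comm, mul_right_inj' (pow_ne_zero 3 hc), IsLinked]

lemma IsLinked.unique {m N N' x y : R} (h : IsLinked m N x y) (h' : IsLinked m N' x y)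
    (hF : simplestForm m x y ≠ 0) : N = N' :=
  mul_right_cancel₀ hF (h.trans h'.symm)

lemma IsLinked.mul_mul_add_ne_zero {m N x y : R} (h : IsLinked m N x y)
    (hF : simplestForm m x y ≠ 0) (hN : N ≠ m) : x * y * (x + y) ≠ 0 := fun hxy =>
  hN <| h.unique (by unfold IsLinked; linear_combination -(m ^ 2 + 3 * m + 9) * hxy) hF

end CommRing

section Field

variable {K : Type*} [Field K]

/-- The Möbius map `θ ↦ -1 / (1 + θ)` of order three that permutes the roots of every simplest
cubic polynomial. It takes the junk value `0` at `θ = -1`. -/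
def rot (θ : K) : K := -1 / (1 + θ)

/-- The Möbius map of the matrix `[[y, -x], [x, x + y]]`; up to scalars these are the matrices that
commute with the matrix `[[0, -1], [1, 1]]` of `rot`. -/
def mobius (x y θ : K) : K := (y * θ - x) / (x * θ + x + y)

/-- The ratio `y / x` of the parameters of the map `mobius x y` that sends `θ` to `w`. -/
def mobiusRatio (θ w : K) : K := (w * θ + w + 1) / (θ - w)

lemma map_rot {K' : Type*} [Field K'] (φ : K →+* K') (θ : K) : φ (rot θ) = rot (φ θ) := by
  simp only [rot, map_div₀, map_neg, map_add, map_one]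

lemma map_mobiusRatio {K' : Type*} [Field K'] (φ : K →+* K') (θ w : K) :
    φ (mobiusRatio θ w) = mobiusRatio (φ θ) (φ w) := by
  simp only [mobiusRatio, map_div₀, map_add, map_sub, map_mul, map_one]

lemma rot_rot {θ : K} (h0 : θ ≠ 0) (h1 : 1 + θ ≠ 0) : rot (rot θ) = -(1 + θ) / θ := by
  have h : 1 + -1 / (1 + θ) = θ / (1 + θ) := by field_simp; ring
  rw [rot, rot, h]
  field_simp

lemma rot_rot_rot {θ : K} (h0 : θ ≠ 0) (h1 : 1 + θ ≠ 0) : rot (rot (rot θ)) = θ := by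
  have h : 1 + -(1 + θ) / θ = -1 / θ := by field_simp; ring
  rw [rot_rot h0 h1, rot, h]
  field_simp

lemma inv_rot_rot {θ : K} (h0 : θ ≠ 0) (h1 : 1 + θ ≠ 0) : (rot (rot θ))⁻¹ = rot θ⁻¹ := by
  have h : 1 + θ⁻¹ = (1 + θ) / θ := by field_simp; ring
  rw [rot_rot h0 h1, rot, h]
  field_simp

lemma mobiusRatio_rot_rot {θ w : K} (hθ : 1 + θ ≠ 0) (hw : 1 + w ≠ 0) :
    mobiusRatio (rot θ) (rot w) = mobiusRatio θ w := by
  have hnum : rot w * rot θ + rot w + 1 = (w * θ + w + 1) / ((1 + w) * (1 + θ)) := by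
    unfold rot; field_simp; ring
  have hden : rot θ - rot w = (θ - w) / ((1 + w) * (1 + θ)) := by
    unfold rot; field_simp; ring
  rw [mobiusRatio, hnum, hden, div_div_div_cancel_right₀ (mul_ne_zero hw hθ), mobiusRatio]

lemma mobius_one_mobiusRatio {θ w : K} (hne : w ≠ θ) (hden : 1 * θ + 1 + mobiusRatio θ w ≠ 0) :
    mobius 1 (mobiusRatio θ w) θ = w := by
  have hsub : θ - w ≠ 0 := sub_ne_zero.mpr hne.symm
  have h : mobiusRatio θ w * (θ - w) = w * θ + w + 1 := div_mul_cancel₀ _ hsub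
  rw [mobius, div_eq_iff hden]
  linear_combination h

lemma mobius_neg_add_mobius {x y θ : K} (hden : x * θ + x + y ≠ 0)
    (hdet : x ^ 2 + x * y + y ^ 2 ≠ 0) : mobius (-x) (x + y) (mobius x y θ) = θ := by
  set w := mobius x y θ
  have hw : w * (x * θ + x + y) = y * θ - x := div_mul_cancel₀ _ hden
  have hden' : -x * w + -x + (x + y) ≠ 0 := by
    refine left_ne_zero_of_mul (b := x * θ + x + y) ?_
    convert hdet using 1
    linear_combination -x * hw
  rw [mobius, div_eq_iff hden']
  linear_combination hw

namespace IsSimplestRoot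

variable {m N θ w : K}

lemma ne_zero (h : IsSimplestRoot m θ) : θ ≠ 0 := by
  rintro rfl
  exact one_ne_zero (α := K) (by unfold IsSimplestRoot at h; linear_combination -h)

lemma one_add_ne_zero (h : IsSimplestRoot m θ) : 1 + θ ≠ 0 := by
  intro hθ
  obtain rfl : θ = -1 := by linear_combination hθ
  exact one_ne_zero (α := K) (by unfold IsSimplestRoot at h; linear_combination h)

lemma inv (h : IsSimplestRoot m θ) : IsSimplestRoot (-m - 3) θ⁻¹ := by
  have h0 := h.ne_zero
  unfold IsSimplestRoot at *
  field_simp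
  linear_combination -h

lemma parameter_unique (h : IsSimplestRoot m θ) (h' : IsSimplestRoot N θ) : m = N := by
  have hmul : (m - N) * (θ * (1 + θ)) = 0 := by
    unfold IsSimplestRoot at h h'; linear_combination h' - h
  exact sub_eq_zero.mp <|
    (mul_eq_zero.mp hmul).resolve_right (mul_ne_zero h.ne_zero h.one_add_ne_zero)

lemma eq_or_eq_rot_or_eq_rot_rot (hθ : IsSimplestRoot m θ) (hw : IsSimplestRoot m w) :
    w = θ ∨ w = rot θ ∨ w = rot (rot θ) := by
  have h0 := hθ.ne_zero
  have h1 := hθ.one_add_ne_zero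
  have hfactor : (w - θ) * ((w * (1 + θ) + 1) * (w * θ + 1 + θ)) = 0 := by
    unfold IsSimplestRoot at hθ hw
    linear_combination θ * (1 + θ) * hw - w * (1 + w) * hθ
  rcases mul_eq_zero.mp hfactor with h | h
  · exact .inl (sub_eq_zero.mp h)
  rcases mul_eq_zero.mp h with h | h
  · refine .inr (.inl ?_)
    rw [rot, eq_div_iff h1]
    linear_combination h
  · refine .inr (.inr ?_)
    rw [rot_rot h0 h1, eq_div_iff h0]
    linear_combination h

lemma mobius_iff {x y : K} (h : IsSimplestRoot m θ) (hden : x * θ + x + y ≠ 0) :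
    IsSimplestRoot N (mobius x y θ) ↔ IsLinked m N x y := by
  set w := mobius x y θ
  have hw : w * (x * θ + x + y) = y * θ - x := div_mul_cancel₀ _ hden
  have hkey : (x * θ + x + y) ^ 3 * (w ^ 3 - N * w ^ 2 - (N + 3) * w - 1) =
      (N * simplestForm m x y -
        (m * simplestForm m x y + (m ^ 2 + 3 * m + 9) * x * y * (x + y))) * (θ * (1 + θ)) := by
    calc
      _ = simplestForm N (w * (x * θ + x + y)) (x * θ + x + y) := by unfold simplestForm; ring
      _ = simplestForm N (y * θ - x) (x * θ + x + y) := by rw [hw]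
      _ = _ := by
        unfold IsSimplestRoot at h
        unfold simplestForm
        linear_combination (y ^ 3 - N * y ^ 2 * x - (N + 3) * y * x ^ 2 - x ^ 3) * h
  have hθ : θ * (1 + θ) ≠ 0 := mul_ne_zero h.ne_zero h.one_add_ne_zero
  rw [IsSimplestRoot, ← mul_right_inj' (pow_ne_zero 3 hden), hkey, mul_zero,
    mul_eq_zero_iff_right hθ, sub_eq_zero, IsLinked]

end IsSimplestRoot

section Subfield

variable {S : Type*} [SetLike S K] [SubfieldClass S K] {E : S} {x y θ w : K}

lemma rot_mem (hθ : θ ∈ E) : rot θ ∈ E :=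
  div_mem (neg_mem (one_mem E)) (add_mem (one_mem E) hθ)

lemma mobius_mem (hx : x ∈ E) (hy : y ∈ E) (hθ : θ ∈ E) : mobius x y θ ∈ E :=
  div_mem (sub_mem (mul_mem hy hθ) hx) (add_mem (add_mem (mul_mem hx hθ) hx) hy)

lemma mobiusRatio_mem (hθ : θ ∈ E) (hw : w ∈ E) : mobiusRatio θ w ∈ E :=
  div_mem (add_mem (add_mem (mul_mem hw hθ) hw) (one_mem E)) (sub_mem hθ hw)

lemma mobius_den_ne_zero (hθ : θ ∉ E) (hx : x ∈ E) (hy : y ∈ E) (hx0 : x ≠ 0) :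
    x * θ + x + y ≠ 0 := by
  intro h
  have hθ_eq : θ = -(x + y) / x := by rw [eq_div_iff hx0]; linear_combination h
  exact hθ (hθ_eq ▸ div_mem (neg_mem (add_mem hx hy)) hx)

end Subfield

end Field

section Extension

variable {k K : Type*} [Field k] [Field K] [Algebra k K]

lemma adjoin_mobius {x y θ : K} (hx : x ∈ (⊥ : IntermediateField k K))
    (hy : y ∈ (⊥ : IntermediateField k K)) (hden : x * θ + x + y ≠ 0)
    (hdet : x ^ 2 + x * y + y ^ 2 ≠ 0) : k⟮mobius x y θ⟯ = k⟮θ⟯ := by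
  apply le_antisymm <;> rw [IntermediateField.adjoin_simple_le_iff]
  · exact mobius_mem (bot_le (a := k⟮θ⟯) hx) (bot_le (a := k⟮θ⟯) hy)
      (IntermediateField.mem_adjoin_simple_self k θ)
  · have hmem := IntermediateField.mem_adjoin_simple_self k (mobius x y θ)
    have hx' := bot_le (a := k⟮mobius x y θ⟯) hx
    have hy' := bot_le (a := k⟮mobius x y θ⟯) hy
    simpa only [mobius_neg_add_mobius hden hdet] using
      mobius_mem (neg_mem hx') (add_mem hx' hy') hmem

lemma algEquiv_apply_eq_of_mem_adjoin {θ t : K} (ρ σ : K ≃ₐ[k] K) (h : ρ θ = σ θ)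
    (ht : t ∈ k⟮θ⟯) : ρ t = σ t := by
  have hext : (ρ : K →ₐ[k] K).comp k⟮θ⟯.val = (σ : K →ₐ[k] K).comp k⟮θ⟯.val :=
    IntermediateField.adjoin_algHom_ext k (by simpa using h)
  exact DFunLike.congr_fun hext ⟨t, ht⟩

lemma IsSimplestRoot.algEquiv_apply_eq_or {m : k} {θ : K} (hθ : IsSimplestRoot (algebraMap k K m) θ)
    (ρ : K ≃ₐ[k] K) : ρ θ = θ ∨ ρ θ = rot θ ∨ ρ θ = rot (rot θ) := by
  have hρθ : IsSimplestRoot (algebraMap k K m) (ρ θ) := by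
    simpa using hθ.map (ρ : K →+* K)
  exact hθ.eq_or_eq_rot_or_eq_rot_rot hρθ

variable [IsGalois k K] {m N : k} {θ w : K}

lemma IsSimplestRoot.exists_apply_eq_rot (hθ : IsSimplestRoot (algebraMap k K m) θ)
    (hθk : θ ∉ (⊥ : IntermediateField k K)) : ∃ τ : K ≃ₐ[k] K, τ θ = rot θ := by
  obtain ⟨ρ, hρ⟩ : ∃ ρ : K ≃ₐ[k] K, ρ θ ≠ θ := by
    simpa only [InfiniteGalois.mem_bot_iff_fixed, not_forall] using hθk
  rcases hθ.algEquiv_apply_eq_or ρ with h | h | h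
  · exact absurd h hρ
  · exact ⟨ρ, h⟩
  · have hmap : ρ (rot (rot θ)) = rot (rot (ρ θ)) :=
      (map_rot (ρ : K →+* K) (rot θ)).trans (congrArg rot (map_rot (ρ : K →+* K) θ))
    refine ⟨ρ.trans ρ, ?_⟩
    rw [AlgEquiv.trans_apply, h, hmap, h, rot_rot_rot hθ.ne_zero hθ.one_add_ne_zero]

lemma IsSimplestRoot.mem_bot_of_apply_eq {t : K} (hθ : IsSimplestRoot (algebraMap k K m) θ)
    {τ : K ≃ₐ[k] K} (hτ : τ θ = rot θ) (ht : t ∈ k⟮θ⟯) (hfix : τ t = t) :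
    t ∈ (⊥ : IntermediateField k K) := by
  rw [InfiniteGalois.mem_bot_iff_fixed]
  intro ρ
  rcases hθ.algEquiv_apply_eq_or ρ with h | h | h
  · exact algEquiv_apply_eq_of_mem_adjoin ρ .refl h ht
  · rw [algEquiv_apply_eq_of_mem_adjoin ρ τ (h.trans hτ.symm) ht, hfix]
  · have hττ : (τ.trans τ) θ = rot (rot θ) := by
      have hmap : τ (rot θ) = rot (τ θ) := map_rot (τ : K →+* K) θ
      rw [AlgEquiv.trans_apply, hτ, hmap, hτ]
    rw [algEquiv_apply_eq_of_mem_adjoin ρ (τ.trans τ) (h.trans hττ.symm) ht,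
      AlgEquiv.trans_apply, hfix, hfix]

lemma IsSimplestRoot.exists_isLinked_of_apply_eq_rot (hθ : IsSimplestRoot (algebraMap k K m) θ)
    (hθk : θ ∉ (⊥ : IntermediateField k K)) (hw : IsSimplestRoot (algebraMap k K N) w)
    (hwθ : w ∈ k⟮θ⟯) {τ : K ≃ₐ[k] K} (hτθ : τ θ = rot θ) (hτw : τ w = rot w) :
    ∃ t : k, IsLinked m N 1 t := by
  rcases eq_or_ne w θ with rfl | hne
  · obtain rfl : N = m := (algebraMap k K).injective (hw.parameter_unique hθ)
    exact ⟨0, by unfold IsLinked; ring⟩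
  have hfix : τ (mobiusRatio θ w) = mobiusRatio θ w := by
    have hmap : τ (mobiusRatio θ w) = mobiusRatio (τ θ) (τ w) := map_mobiusRatio (τ : K →+* K) θ w
    rw [hmap, hτθ, hτw, mobiusRatio_rot_rot hθ.one_add_ne_zero hw.one_add_ne_zero]
  have hbot := hθ.mem_bot_of_apply_eq hτθ
    (mobiusRatio_mem (IntermediateField.mem_adjoin_simple_self k θ) hwθ) hfix
  have hden := mobius_den_ne_zero hθk (one_mem _) hbot one_ne_zero
  rw [← mobius_one_mobiusRatio hne hden, hθ.mobius_iff hden] at hw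
  obtain ⟨t, ht⟩ := IntermediateField.mem_bot.mp hbot
  rw [← ht, ← map_one (algebraMap k K)] at hw
  exact ⟨t, (isLinked_map_iff (algebraMap k K).injective).mp hw⟩

theorem IsSimplestRoot.exists_isLinked (hθ : IsSimplestRoot (algebraMap k K m) θ)
    (hw : IsSimplestRoot (algebraMap k K N) w) (hwk : w ∉ (⊥ : IntermediateField k K))
    (hwθ : w ∈ k⟮θ⟯) : ∃ t : k, IsLinked m N 1 t ∨ IsLinked m (-N - 3) 1 t := by
  have hθk : θ ∉ (⊥ : IntermediateField k K) := fun h =>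
    hwk (IntermediateField.adjoin_simple_le_iff.mpr h hwθ)
  obtain ⟨τ, hτ⟩ := hθ.exists_apply_eq_rot hθk
  rcases hw.algEquiv_apply_eq_or τ with h | h | h
  · exact absurd (hθ.mem_bot_of_apply_eq hτ hwθ h) hwk
  · exact (hθ.exists_isLinked_of_apply_eq_rot hθk hw hwθ hτ h).imp fun _ => .inl
  · have hw_inv : IsSimplestRoot (algebraMap k K (-N - 3)) w⁻¹ := by
      simpa only [map_sub, map_neg, map_ofNat] using hw.inv
    have hτw_inv : τ w⁻¹ = rot w⁻¹ := by
      rw [map_inv₀, h, inv_rot_rot hw.ne_zero hw.one_add_ne_zero]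
    exact (hθ.exists_isLinked_of_apply_eq_rot hθk hw_inv (inv_mem hwθ) hτ hτw_inv).imp
      fun _ => .inr

end Extension

section Integers

lemma odd_binaryCubic {a b c d x y : ℤ} (ha : Odd a) (hd : Odd d) (hbc : Odd (b + c))
    (hxy : IsCoprime x y) : Odd (a * x ^ 3 + b * x ^ 2 * y + c * x * y ^ 2 + d * y ^ 3) := by
  have hnot : ¬ (Even x ∧ Even y) := fun ⟨hx, hy⟩ => by
    have h := hxy.isUnit_of_dvd' hx.two_dvd hy.two_dvd
    norm_num [Int.isUnit_iff] at h
  simp only [Int.odd_add, Int.odd_mul, Int.odd_pow, ← Int.not_odd_iff_even] at *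
  tauto

lemma binaryCubic_ne_zero {a b c d x y : ℤ} (ha : Odd a) (hd : Odd d) (hbc : Odd (b + c))
    (hx : x ≠ 0) : a * x ^ 3 + b * x ^ 2 * y + c * x * y ^ 2 + d * y ^ 3 ≠ 0 := by
  obtain ⟨x', y', hcop, hx', hy'⟩ := Int.exists_gcd_one (Int.gcd_pos_of_ne_zero_left y hx)
  generalize (x.gcd y : ℤ) = g at hx' hy'
  subst hx' hy'
  have hodd := odd_binaryCubic ha hd hbc (Int.isCoprime_iff_gcd_eq_one.mpr hcop)
  have hne : a * x' ^ 3 + b * x' ^ 2 * y' + c * x' * y' ^ 2 + d * y' ^ 3 ≠ 0 := fun h =>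
    Int.not_odd_zero (h ▸ hodd)
  convert mul_ne_zero (pow_ne_zero 3 (right_ne_zero_of_mul hx)) hne using 1
  ring

lemma simplestForm_ne_zero {m x y : ℤ} (hx : x ≠ 0) : simplestForm m x y ≠ 0 := by
  convert binaryCubic_ne_zero (a := 1) (b := -m) (c := -(m + 3)) (d := -1) (y := y)
    odd_one (by decide) ⟨-m - 2, by ring⟩ hx using 1
  unfold simplestForm; ring

lemma not_isLinked_neg_sub_three {m x y : ℤ} (hx : x ≠ 0) : ¬ IsLinked m (-m - 3) x y := by
  intro h
  refine binaryCubic_ne_zero (a := 2 * m + 3) (b := 9 - m ^ 2) (c := -m ^ 2 - 6 * m)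
    (d := -(2 * m + 3)) (y := y) ⟨m + 1, by ring⟩ ⟨-m - 2, by ring⟩ ⟨4 - m ^ 2 - 3 * m, by ring⟩
    hx ?_
  unfold IsLinked simplestForm at h
  linear_combination -h

lemma exists_pos_dvd_of_isLinked {m N x y : ℤ} (h : IsLinked m N x y) (hxy : IsCoprime x y)
    (hx : x ≠ 0) (hN : N ≠ m) : ∃ u v : ℤ, u * v * (u + v) ≠ 0 ∧ 0 < simplestForm m u v ∧
      simplestForm m u v ∣ m ^ 2 + 3 * m + 9 ∧ IsLinked m N u v := by
  have hF := simplestForm_ne_zero (m := m) (y := y) hx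
  rcases hF.lt_or_gt with hneg | hpos
  · have hF' : simplestForm m (-x) (-y) ≠ 0 := simplestForm_ne_zero (neg_ne_zero.mpr hx)
    refine ⟨-x, -y, h.neg.mul_mul_add_ne_zero hF' hN, ?_, h.neg.dvd hxy.neg_neg, h.neg⟩
    rw [simplestForm_neg]
    exact neg_pos.mpr hneg
  · exact ⟨x, y, h.mul_mul_add_ne_zero hF hN, hpos, h.dvd hxy, h⟩

lemma isLinked_den_num {m N : ℤ} {t : ℚ} (h : IsLinked (m : ℚ) N 1 t) :
    IsLinked m N t.den t.num := by
  rw [← isLinked_mul_iff (c := (t.den : ℚ)) (mod_cast t.den_ne_zero), mul_one,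
    Rat.den_mul_eq_num] at h
  exact isLinked_intCast_iff.mp h

lemma exists_pos_dvd_of_isLinked_one {m N : ℤ} {t : ℚ} (h : IsLinked (m : ℚ) N 1 t)
    (hN : N ≠ m) : ∃ x y : ℤ, x * y * (x + y) ≠ 0 ∧ 0 < simplestForm m x y ∧
      simplestForm m x y ∣ m ^ 2 + 3 * m + 9 ∧ IsLinked m N x y :=
  exists_pos_dvd_of_isLinked (isLinked_den_num h) (Rat.isCoprime_num_den t).symm
    (mod_cast t.den_ne_zero) hN

lemma exists_isLinked_of_dvd {m x y : ℤ} (hxy : x * y * (x + y) ≠ 0)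
    (hdvd : simplestForm m x y ∣ m ^ 2 + 3 * m + 9) :
    ∃ N : ℤ, N ≠ m ∧ N ≠ -m - 3 ∧ IsLinked m N x y := by
  obtain ⟨c, hc⟩ := hdvd
  have hD : m ^ 2 + 3 * m + 9 ≠ 0 := by nlinarith [sq_nonneg (2 * m + 3)]
  have hc0 : c ≠ 0 := right_ne_zero_of_mul (hc ▸ hD)
  have hlinked : IsLinked m (m + c * (x * y * (x + y))) x y := by
    unfold IsLinked; rw [hc]; ring
  refine ⟨_, ?_, fun h => ?_, hlinked⟩
  · simpa using mul_ne_zero hc0 hxy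
  · exact not_isLinked_neg_sub_three (left_ne_zero_of_mul (left_ne_zero_of_mul hxy)) (h ▸ hlinked)

lemma xor_isLinked {m n x y : ℤ} (hF : simplestForm m x y ≠ 0)
    (h : IsLinked m n x y ∨ IsLinked m (-n - 3) x y) :
    Xor (IsLinked m n x y) (IsLinked m (-n - 3) x y) := by
  refine h.imp (fun h => ⟨h, fun h' => ?_⟩) (fun h => ⟨h, fun h' => ?_⟩) <;>
    have := h.unique h' hF <;> omega

end Integers

section SimplestCubicField

lemma IsSimplestRoot.notMem_bot {K : Type*} [Field K] [Algebra ℚ K] {m : ℤ} {θ : K}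
    (h : IsSimplestRoot (m : K) θ) : θ ∉ (⊥ : IntermediateField ℚ K) := by
  intro hθ
  obtain ⟨r, rfl⟩ := IntermediateField.mem_bot.mp hθ
  have hr : r ≠ 0 := by
    rintro rfl
    exact h.ne_zero (map_zero _)
  have hroot : simplestForm (m : ℚ) r 1 = 0 := by
    apply (algebraMap ℚ K).injective
    rw [map_simplestForm, map_intCast, map_one, map_zero, simplestForm]
    unfold IsSimplestRoot at h
    linear_combination h
  apply simplestForm_ne_zero (m := m) (y := r.den) (Rat.num_ne_zero.mpr hr)
  have hcast : simplestForm (m : ℚ) (r.den * r) (r.den * 1) = 0 := by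
    rw [simplestForm_mul, hroot, mul_zero]
  rw [Rat.den_mul_eq_num, mul_one] at hcast
  unfold simplestForm at *
  exact_mod_cast hcast

lemma degree_f (m : ℤ) : (f m).degree = 3 := by
  unfold f; compute_degree!

lemma aeval_f_eq_zero_iff {K : Type*} [Field K] [Algebra ℚ K] {m : ℤ} {θ : K} :
    aeval θ (f m) = 0 ↔ IsSimplestRoot (m : K) θ := by
  simp [f, IsSimplestRoot]

lemma exists_isSimplestRoot (K : Type*) [Field K] [Algebra ℚ K] [IsAlgClosed K] (m : ℤ) :
    ∃ θ : K, IsSimplestRoot (m : K) θ := by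
  obtain ⟨θ, hθ⟩ := IsAlgClosed.exists_aeval_eq_zero K (f m) (by rw [degree_f]; norm_num)
  exact ⟨θ, aeval_f_eq_zero_iff.mp hθ⟩

lemma L_eq_adjoin {m : ℤ} {θ : AlgebraicClosure ℚ}
    (hθ : IsSimplestRoot (m : AlgebraicClosure ℚ) θ) : L m = ℚ⟮θ⟯ := by
  have hf : f m ≠ 0 := Polynomial.ne_zero_of_degree_gt (n := 0) (by rw [degree_f]; norm_num)
  have hmem := IntermediateField.mem_adjoin_simple_self ℚ θ
  apply le_antisymm
  · refine IntermediateField.adjoin_le_iff.mpr fun φ hφ => ?_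
    have hφ_root := aeval_f_eq_zero_iff.mp ((mem_rootSet_of_ne hf).mp hφ)
    rcases hθ.eq_or_eq_rot_or_eq_rot_rot hφ_root with rfl | rfl | rfl
    exacts [hmem, rot_mem hmem, rot_mem (rot_mem hmem)]
  · exact IntermediateField.adjoin_simple_le_iff.mpr <| IntermediateField.subset_adjoin ℚ _ <|
      (mem_rootSet_of_ne hf).mpr (aeval_f_eq_zero_iff.mpr hθ)

lemma L_eq_of_isLinked {m N x y : ℤ} (h : IsLinked m N x y) (hx : x ≠ 0) : L N = L m := by
  obtain ⟨θ, hθ⟩ := exists_isSimplestRoot (AlgebraicClosure ℚ) m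
  have hden := mobius_den_ne_zero hθ.notMem_bot (intCast_mem _ x) (intCast_mem _ y)
    (Int.cast_ne_zero.mpr hx)
  have hdet : (x : AlgebraicClosure ℚ) ^ 2 + x * y + y ^ 2 ≠ 0 := by
    have : x ^ 2 + x * y + y ^ 2 ≠ 0 := by nlinarith [sq_nonneg (x + 2 * y), sq_pos_of_ne_zero hx]
    exact_mod_cast this
  have hN : IsSimplestRoot (N : AlgebraicClosure ℚ) (mobius (x : AlgebraicClosure ℚ) y θ) :=
    (hθ.mobius_iff hden).mpr (isLinked_intCast_iff.mpr h)
  rw [L_eq_adjoin hN, L_eq_adjoin hθ,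
    adjoin_mobius (intCast_mem _ x) (intCast_mem _ y) hden hdet]

-- Mathlib's instance is stated for `AlgebraicClosure.instAlgebra`, but the `ℚ`-algebra structure
-- underlying `L m` is `DivisionRing.toRatAlgebra`, which is only propositionally equal to it.
instance : IsAlgClosure ℚ (AlgebraicClosure ℚ) where
  isAlgClosed := inferInstance
  isAlgebraic := by convert! AlgebraicClosure.isAlgebraic ℚ

theorem exists_pos_dvd_of_L_eq {m n : ℤ} (hm : n ≠ m) (hm' : n ≠ -m - 3) (hL : L n = L m) :
    ∃ x y : ℤ, x * y * (x + y) ≠ 0 ∧ 0 < simplestForm m x y ∧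
      simplestForm m x y ∣ m ^ 2 + 3 * m + 9 ∧
      (IsLinked m n x y ∨ IsLinked m (-n - 3) x y) := by
  obtain ⟨θ, hθ⟩ := exists_isSimplestRoot (AlgebraicClosure ℚ) m
  obtain ⟨w, hw⟩ := exists_isSimplestRoot (AlgebraicClosure ℚ) n
  have hwθ : w ∈ ℚ⟮θ⟯ := by
    rw [← L_eq_adjoin hθ, ← hL, L_eq_adjoin hw]
    exact IntermediateField.mem_adjoin_simple_self ℚ w
  obtain ⟨t, ht⟩ := IsSimplestRoot.exists_isLinked (m := (m : ℚ)) (N := (n : ℚ))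
    (by simpa using hθ) (by simpa using hw) hw.notMem_bot hwθ
  rcases ht with ht | ht
  · obtain ⟨x, y, hxy, hpos, hdvd, h⟩ := exists_pos_dvd_of_isLinked_one ht hm
    exact ⟨x, y, hxy, hpos, hdvd, .inl h⟩
  · obtain ⟨x, y, hxy, hpos, hdvd, h⟩ := exists_pos_dvd_of_isLinked_one (N := -n - 3)
      (by exact_mod_cast ht) (by lia)
    exact ⟨x, y, hxy, hpos, hdvd, .inr h⟩

end SimplestCubicField

theorem stmt0 (m : ℤ) :
    ((∃ n : ℤ, n ≠ m ∧ n ≠ -m - 3 ∧ L n = L m) ↔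
      ∃ x y : ℤ, x * y * (x + y) ≠ 0 ∧ 0 < F m x y ∧ F m x y ∣ m ^ 2 + 3 * m + 9) ∧
    ((∃ n : ℤ, n ≠ m ∧ n ≠ -m - 3 ∧ L n = L m) →
      ∃ n x y : ℤ, n ≠ m ∧ n ≠ -m - 3 ∧ L n = L m ∧
        x * y * (x + y) ≠ 0 ∧ 0 < F m x y ∧ F m x y ∣ m ^ 2 + 3 * m + 9 ∧
        Xor'
          (n * F m x y = m * F m x y + (m ^ 2 + 3 * m + 9) * x * y * (x + y))
          ((-n - 3) * F m x y = m * F m x y + (m ^ 2 + 3 * m + 9) * x * y * (x + y))) := by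
  have hforward {n : ℤ} (h : n ≠ m ∧ n ≠ -m - 3 ∧ L n = L m) :=
    exists_pos_dvd_of_L_eq h.1 h.2.1 h.2.2
  refine ⟨⟨?_, ?_⟩, ?_⟩
  · rintro ⟨n, hn⟩
    obtain ⟨x, y, hxy, hpos, hdvd, -⟩ := hforward hn
    exact ⟨x, y, hxy, hpos, hdvd⟩
  · rintro ⟨x, y, hxy, -, hdvd⟩
    obtain ⟨n, hn, hn', h⟩ := exists_isLinked_of_dvd hxy hdvd
    exact ⟨n, hn, hn', L_eq_of_isLinked h (left_ne_zero_of_mul (left_ne_zero_of_mul hxy))⟩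
  · rintro ⟨n, hn⟩
    obtain ⟨x, y, hxy, hpos, hdvd, h⟩ := hforward hn
    exact ⟨n, x, y, hn.1, hn.2.1, hn.2.2, hxy, hpos, hdvd, xor_isLinked hpos.ne' h⟩
end

section
/- For integers m, n with −1 ≤ m < n, if L_m = L_n then m ≤ 35731. -/
open Polynomial

/-!
Suppose `m < n`, `0 ≤ m` and `L m = L n`, and embed this cyclic cubic field into `ℝ`. Choose roots
`a > 1` of `f m` and `c` of `f n` (or of `f (-n - 3)`, whose roots are the inverses) such that one
generator `σ` of the Galois group acts on both by `x ↦ -1 / (1 + x)`. Two estimates contradict each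
other once `m` is large.

* Gap: `a` and `c` are units, so `c * a⁻¹ ^ k - u` with `u = ±1` has integral norm. If
  `a < |c| < a ^ 54`, then for the `k` with `|c|` closest to `a ^ k` and a suitable sign this norm
  is nonzero of absolute value less than `1`. Hence `a ^ 54 ≤ |c|`.
* Approximation: since the trace of `a * c` is an integer, `(a - ω) * conj (c - ω)` is a real
  multiple of a primitive Eisenstein integer `D`. Put `τ m = m + 3 + 3 * ω` and `θ = √-3`. As
  `D ^ 3 * τ m * conj (τ n)` is real, `‖D‖ ^ 3 ≤ 9 * √3 * ‖τ m‖ * ‖τ n‖`, while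
  `D / conj D` is within `2 / ‖τ n‖` of `(a - ω) / conj (a - ω) = (1 + θ ^ 3 / τ m) ^ (1 / 3)`.
  The Padé approximants of `(1 + X) ^ (1 / 3)` at `θ ^ 3 / τ m`, whose denominators are cleared by
  powers of `τ m` alone, bound this distance from below, which forces `‖τ n‖ ≤ (‖τ m‖ / 27) ^ 54`.
-/

open scoped ComplexConjugate

namespace SimplestCubic

section Binomial

open Finset

section BinomialRing

variable {R : Type*} [CommRing R] [BinomialRing R]

lemma choose_succ_mul_succ (a : R) (j : ℕ) :
    Ring.choose a (j + 1) * (j + 1) = Ring.choose a j * (a - j) := by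
  have h := Ring.choose_smul_choose a (n := j + 1) (k := j) (by omega)
  simp only [Nat.choose_succ_self_right, nsmul_eq_mul, add_tsub_cancel_left,
    Ring.choose_one_right] at h
  rw [← h]
  push_cast
  ring

lemma succ_mul_choose_succ_succ (a : R) (k : ℕ) :
    (k + 1) * Ring.choose (a + 1) (k + 1) = (a + 1) * Ring.choose a k := by
  simpa using Ring.choose_smul_choose (a + 1) (n := k + 1) (k := 1) (by omega)

lemma sum_antidiagonal_choose_mul_natChoose_mul_choose (a b : R) (l d : ℕ) :
    ∑ p ∈ antidiagonal (l + d), Ring.choose a p.1 * p.1.choose l * Ring.choose b p.2 =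
      Ring.choose a l * Ring.choose (a + b - l) d := by
  have shift (i : ℕ) : Ring.choose a (l + i) * (l + i).choose l =
      Ring.choose a l * Ring.choose (a - l) i := by
    have h := Ring.choose_smul_choose a (n := l + i) (k := l) (by omega)
    rw [add_tsub_cancel_left, nsmul_eq_mul] at h
    rw [← h, mul_comm]
  rw [show a + b - l = (a - l) + b by ring, Ring.add_choose_eq _ (Commute.all _ _), mul_sum,
    Nat.sum_antidiagonal_eq_sum_range_succ_mk, Nat.sum_antidiagonal_eq_sum_range_succ_mk,
    Nat.succ_eq_add_one, add_assoc, sum_range_add, sum_eq_zero, zero_add]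
  · refine sum_congr rfl fun i _ ↦ ?_
    dsimp only
    rw [shift, Nat.add_sub_add_left, mul_assoc]
  · intro i hi
    rw [Nat.choose_eq_zero_of_lt (mem_range.mp hi)]
    simp

lemma sum_antidiagonal_choose_mul_choose_mul_choose_sub (a b N : R) {r k : ℕ} (hrk : r ≤ k) :
    ∑ p ∈ antidiagonal k, Ring.choose a p.1 * (Ring.choose b p.2 * Ring.choose (N - p.2) r) =
      ∑ q ∈ antidiagonal r, Ring.choose (N - k) q.1 *
        (Ring.choose a q.2 * Ring.choose (a + b - q.2) (k - q.2)) := by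
  calc
    _ = ∑ p ∈ antidiagonal k, ∑ q ∈ antidiagonal r, Ring.choose (N - k) q.1 *
          (Ring.choose a p.1 * p.1.choose q.2 * Ring.choose b p.2) := by
      refine sum_congr rfl fun p hp ↦ ?_
      have hk : (k : R) = p.1 + p.2 := by rw [← mem_antidiagonal.mp hp, Nat.cast_add]
      rw [show N - p.2 = (N - k) + p.1 by rw [hk]; ring, Ring.add_choose_eq _ (Commute.all _ _),
        mul_sum, mul_sum]
      refine sum_congr rfl fun q _ ↦ ?_
      rw [Ring.choose_natCast]
      ring
    _ = _ := by
      rw [sum_comm]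
      refine sum_congr rfl fun q hq ↦ ?_
      obtain ⟨d, rfl⟩ : ∃ d, k = q.2 + d :=
        Nat.exists_eq_add_of_le ((le_add_self.trans_eq (mem_antidiagonal.mp hq)).trans hrk)
      rw [← mul_sum, sum_antidiagonal_choose_mul_natChoose_mul_choose, add_tsub_cancel_left]

lemma sum_antidiagonal_choose_mul_choose_mul_choose_eq_zero {a b : R} (N : R) {r k : ℕ}
    (hab : a + b = r) (hrk : r < k) :
    ∑ p ∈ antidiagonal k, Ring.choose a p.1 * (Ring.choose b p.2 * Ring.choose (N - p.2) r) =
      0 := by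
  rw [sum_antidiagonal_choose_mul_choose_mul_choose_sub a b N hrk.le]
  refine sum_eq_zero fun q hq ↦ ?_
  have hq : q.2 ≤ r := le_add_self.trans_eq (mem_antidiagonal.mp hq)
  rw [hab, ← Nat.cast_sub hq, Ring.choose_natCast, Nat.choose_eq_zero_of_lt (by omega)]
  simp

lemma sum_antidiagonal_choose_mul_choose_mul_choose_self {a b : R} (N : R) {r : ℕ}
    (hab : a + b = r) :
    ∑ p ∈ antidiagonal r, Ring.choose a p.1 * (Ring.choose b p.2 * Ring.choose (N - p.2) r) =
      Ring.choose (N - r + a) r := by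
  rw [sum_antidiagonal_choose_mul_choose_mul_choose_sub a b N le_rfl,
    Ring.add_choose_eq _ (Commute.all _ _)]
  refine sum_congr rfl fun q hq ↦ ?_
  have hq : q.2 ≤ r := le_add_self.trans_eq (mem_antidiagonal.mp hq)
  rw [hab, ← Nat.cast_sub hq, Ring.choose_natCast, Nat.choose_self, Nat.cast_one, mul_one]

end BinomialRing

variable {ν : ℚ}

lemma abs_choose_le_one (h0 : 0 ≤ ν) (h1 : ν ≤ 1) (i : ℕ) : |Ring.choose ν i| ≤ 1 := by
  induction i with
  | zero => simp
  | succ i ih =>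
    have hi : (0 : ℚ) < i + 1 := by positivity
    have hν : |ν - i| ≤ i + 1 := by rw [abs_le]; constructor <;> linarith
    refine le_of_mul_le_mul_right ?_ hi
    calc |Ring.choose ν (i + 1)| * (i + 1) = |Ring.choose ν i| * |ν - i| := by
          rw [← abs_mul, ← choose_succ_mul_succ, abs_mul, abs_of_pos hi]
      _ ≤ 1 * (i + 1) := by gcongr

lemma choose_sub_nonneg (h1 : ν ≤ 1) {r j : ℕ} (hj : j ≤ r) :
    0 ≤ Ring.choose ((r : ℚ) - ν) j := by
  induction j with
  | zero => simp
  | succ j ih =>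
    have hjr : (j : ℚ) + 1 ≤ r := by exact_mod_cast hj
    refine nonneg_of_mul_nonneg_left ?_ (show (0 : ℚ) < j + 1 by positivity)
    rw [choose_succ_mul_succ]
    exact mul_nonneg (ih (by omega)) (by linarith)

lemma choose_sub_le_natChoose (h0 : 0 ≤ ν) (h1 : ν ≤ 1) {r j : ℕ} (hj : j ≤ r) :
    Ring.choose ((r : ℚ) - ν) j ≤ r.choose j := by
  induction j with
  | zero => simp
  | succ j ih =>
    have hjr : (j : ℚ) + 1 ≤ r := by exact_mod_cast hj
    refine le_of_mul_le_mul_right ?_ (show (0 : ℚ) < j + 1 by positivity)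
    rw [choose_succ_mul_succ, ← Ring.choose_natCast r (j + 1), choose_succ_mul_succ,
      Ring.choose_natCast]
    exact mul_le_mul (ih (by omega)) (by linarith) (by linarith) (by positivity)

lemma abs_choose_sub_mul_natChoose_le_one (h0 : 0 ≤ ν) (h1 : ν ≤ 1) (r t : ℕ) :
    |Ring.choose ((r : ℚ) - ν) (r + t)| * (r + t).choose r ≤ 1 := by
  induction t with
  | zero =>
    have h := choose_sub_le_natChoose h0 h1 (le_refl r)
    rw [Nat.choose_self, Nat.cast_one] at h
    simpa [abs_of_nonneg (choose_sub_nonneg h1 (le_refl r))] using h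
  | succ t ih =>
    have hchoose : |Ring.choose ((r : ℚ) - ν) (r + t + 1)| * (r + t + 1) =
        |Ring.choose ((r : ℚ) - ν) (r + t)| * (t + ν) := by
      have h := congrArg abs (choose_succ_mul_succ ((r : ℚ) - ν) (r + t))
      rw [abs_mul, abs_mul, abs_of_nonneg (a := ((r + t : ℕ) : ℚ) + 1) (by positivity)] at h
      push_cast at h
      rw [h, show (r : ℚ) - ν - (r + t) = -(t + ν) by ring, abs_neg,
        abs_of_nonneg (a := (t : ℚ) + ν) (by positivity)]
    have hnat : ((r + t + 1).choose r : ℚ) * (t + 1) = (r + t).choose r * (r + t + 1) := by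
      have h := Nat.choose_mul_succ_eq (r + t) r
      rw [show r + t + 1 - r = t + 1 by omega] at h
      exact_mod_cast h.symm
    refine le_of_mul_le_mul_right ?_ (show (0 : ℚ) < (r + t + 1) * (t + 1) by positivity)
    calc |Ring.choose ((r : ℚ) - ν) (r + t + 1)| * (r + t + 1).choose r * ((r + t + 1) * (t + 1))
        = (|Ring.choose ((r : ℚ) - ν) (r + t + 1)| * (r + t + 1)) *
            ((r + t + 1).choose r * (t + 1)) := by ring
      _ = (|Ring.choose ((r : ℚ) - ν) (r + t)| * (r + t).choose r) *
            ((r + t + 1) * (t + ν)) := by rw [hchoose, hnat]; ring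
      _ ≤ 1 * ((r + t + 1) * (t + 1)) := by gcongr

end Binomial

section Pade

open Finset

/-- The denominator of the `r`-th diagonal Padé approximant of `(1 + X) ^ ν`. -/
noncomputable def padeDenom (ν : ℚ) (r : ℕ) : ℚ[X] :=
  ∑ j ∈ range (r + 1), monomial j (Ring.choose ((r : ℚ) - ν) j * (2 * r - j).choose r)

/-- The power series `(1 + X) ^ ν * padeDenom ν r`, whose terms of degree between `r + 1` and
`2 * r` vanish. -/
noncomputable def padeSeries (ν : ℚ) (r : ℕ) : PowerSeries ℚ :=
  PowerSeries.binomialSeries ℚ ν * (padeDenom ν r : PowerSeries ℚ)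

/-- The numerator of the `r`-th diagonal Padé approximant of `(1 + X) ^ ν`. -/
noncomputable def padeNum (ν : ℚ) (r : ℕ) : ℚ[X] := (padeSeries ν r).trunc (r + 1)

lemma natDegree_padeDenom_le (ν : ℚ) (r : ℕ) : (padeDenom ν r).natDegree ≤ r :=
  natDegree_sum_le_of_forall_le _ _ fun _ hj ↦
    (natDegree_monomial_le _).trans (mem_range_succ_iff.mp hj)

lemma natDegree_padeNum_le (ν : ℚ) (r : ℕ) : (padeNum ν r).natDegree ≤ r :=
  Nat.lt_succ_iff.mp (PowerSeries.natDegree_trunc_lt _ r)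

lemma coeff_padeDenom {r j : ℕ} (ν : ℚ) (hj : j ≤ r) :
    (padeDenom ν r).coeff j = Ring.choose ((r : ℚ) - ν) j * (2 * r - j).choose r := by
  simp [padeDenom, finsetSum_coeff, coeff_monomial, hj]

lemma coeff_padeDenom_of_le_two_mul {r j : ℕ} (ν : ℚ) (hj : j ≤ 2 * r) :
    (padeDenom ν r).coeff j =
      Ring.choose ((r : ℚ) - ν) j * Ring.choose (2 * (r : ℚ) - j) r := by
  rw [show 2 * (r : ℚ) - j = ((2 * r - j : ℕ) : ℚ) by push_cast [hj]; ring, Ring.choose_natCast]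
  obtain hjr | hjr := le_or_gt j r
  · exact coeff_padeDenom ν hjr
  · rw [coeff_eq_zero_of_natDegree_lt ((natDegree_padeDenom_le ν r).trans_lt hjr),
      Nat.choose_eq_zero_of_lt (by omega), Nat.cast_zero, mul_zero]

lemma coeff_padeSeries (ν : ℚ) (r k : ℕ) : PowerSeries.coeff k (padeSeries ν r) =
    ∑ p ∈ antidiagonal k, Ring.choose ν p.1 * (padeDenom ν r).coeff p.2 := by
  simp only [padeSeries, PowerSeries.coeff_mul, PowerSeries.binomialSeries_coeff, smul_eq_mul,
    mul_one, Polynomial.coeff_coe]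

lemma coeff_padeSeries_of_le_two_mul {r k : ℕ} (ν : ℚ) (hk : k ≤ 2 * r) :
    PowerSeries.coeff k (padeSeries ν r) =
      ∑ p ∈ antidiagonal k, Ring.choose ν p.1 *
        (Ring.choose ((r : ℚ) - ν) p.2 * Ring.choose (2 * (r : ℚ) - p.2) r) := by
  rw [coeff_padeSeries]
  refine sum_congr rfl fun p hp ↦ ?_
  rw [coeff_padeDenom_of_le_two_mul ν
    ((le_add_self.trans_eq (mem_antidiagonal.mp hp)).trans hk)]

lemma coeff_padeSeries_eq_zero {r k : ℕ} (ν : ℚ) (hr : r < k)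
    (hk : k ≤ 2 * r) :
    PowerSeries.coeff k (padeSeries ν r) = 0 := by
  rw [coeff_padeSeries_of_le_two_mul ν hk,
    sum_antidiagonal_choose_mul_choose_mul_choose_eq_zero _ (by ring) hr]

lemma padeNum_eq_trunc (ν : ℚ) (r : ℕ) : padeNum ν r = (padeSeries ν r).trunc (2 * r + 1) := by
  ext k
  rw [padeNum, PowerSeries.coeff_trunc, PowerSeries.coeff_trunc]
  split_ifs with h₁ h₂ h₂
  · rfl
  · omega
  · rw [coeff_padeSeries_eq_zero ν (by omega) (by omega)]
  · rfl

lemma coeff_padeNum_self (ν : ℚ) (r : ℕ) :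
    (padeNum ν r).coeff r = Ring.choose ((r : ℚ) + ν) r := by
  rw [padeNum, PowerSeries.coeff_trunc, if_pos r.lt_succ_self,
    coeff_padeSeries_of_le_two_mul ν (by omega),
    sum_antidiagonal_choose_mul_choose_mul_choose_self _ (by ring)]
  congr 1
  ring

lemma abs_choose_sub_mul_choose_le_one {ν : ℚ} (h0 : 0 ≤ ν) (h1 : ν ≤ 1) {r j : ℕ}
    (hj : 2 * r < j) :
    |Ring.choose ((r : ℚ) - ν) j * Ring.choose (2 * (r : ℚ) - j) r| ≤ 1 := by
  obtain ⟨t, rfl⟩ := Nat.exists_eq_add_of_lt hj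
  have hneg : 2 * (r : ℚ) - (2 * r + t + 1 : ℕ) = -((t + 1 : ℕ) : ℚ) := by push_cast; ring
  have hpos : ((t + 1 : ℕ) : ℚ) + r - 1 = (t + r : ℕ) := by push_cast; ring
  have habs : |Ring.choose (2 * (r : ℚ) - (2 * r + t + 1 : ℕ)) r| = (t + r).choose r := by
    rw [hneg, Ring.choose_neg, hpos, Ring.choose_natCast]
    rcases Int.units_eq_one_or (Int.negOnePow r) with h | h <;> simp [h, Units.smul_def]
  have hle : ((t + r).choose r : ℚ) ≤ (r + (r + t + 1)).choose r := by
    exact_mod_cast Nat.choose_le_choose r (by omega)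
  calc _ = |Ring.choose ((r : ℚ) - ν) (r + (r + t + 1))| * (t + r).choose r := by
        rw [abs_mul, habs, show 2 * r + t + 1 = r + (r + t + 1) by ring]
    _ ≤ |Ring.choose ((r : ℚ) - ν) (r + (r + t + 1))| * (r + (r + t + 1)).choose r := by gcongr
    _ ≤ 1 := abs_choose_sub_mul_natChoose_le_one h0 h1 r _

-- Subtracting the vanishing full convolution leaves only the `d + 1` terms with `j > 2 * r`.
lemma abs_coeff_padeSeries_le {ν : ℚ} (h0 : 0 ≤ ν) (h1 : ν ≤ 1) (r d : ℕ) :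
    |PowerSeries.coeff (2 * r + 1 + d) (padeSeries ν r)| ≤
      d + 1 := by
  set full : ℕ → ℚ := fun j ↦ Ring.choose ((r : ℚ) - ν) j * Ring.choose (2 * (r : ℚ) - j) r
  have hfull : ∑ p ∈ antidiagonal (2 * r + 1 + d), Ring.choose ν p.1 * full p.2 = 0 :=
    sum_antidiagonal_choose_mul_choose_mul_choose_eq_zero _ (by ring) (by omega)
  have hterm (p : ℕ × ℕ) : |Ring.choose ν p.1 * ((padeDenom ν r).coeff p.2 - full p.2)| ≤
      if 2 * r + 1 ≤ p.2 then 1 else 0 := by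
    split_ifs with hp
    · rw [coeff_eq_zero_of_natDegree_lt ((natDegree_padeDenom_le ν r).trans_lt (by omega)),
        zero_sub, abs_mul, abs_neg]
      exact mul_le_one₀ (abs_choose_le_one h0 h1 _) (abs_nonneg _)
        (abs_choose_sub_mul_choose_le_one h0 h1 (by omega))
    · rw [coeff_padeDenom_of_le_two_mul ν (by omega), sub_self, mul_zero, abs_zero]
  calc _ = |∑ p ∈ antidiagonal (2 * r + 1 + d),
          Ring.choose ν p.1 * ((padeDenom ν r).coeff p.2 - full p.2)| := by
        simp only [coeff_padeSeries, mul_sub, sum_sub_distrib, hfull, sub_zero]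
    _ ≤ ∑ p ∈ antidiagonal (2 * r + 1 + d), if 2 * r + 1 ≤ p.2 then (1 : ℚ) else 0 :=
        (abs_sum_le_sum_abs _ _).trans (sum_le_sum fun p _ ↦ hterm p)
    _ = d + 1 := by
        rw [sum_boole, Nat.antidiagonal_filter_le_snd_of_le (by omega), card_map,
          Nat.card_antidiagonal, Nat.add_sub_cancel_left]
        push_cast
        rfl

lemma X_pow_dvd_padeSeries_sub (ν : ℚ) (r : ℕ) : PowerSeries.X ^ (2 * r + 1) ∣
    padeSeries ν r - (padeNum ν r : PowerSeries ℚ) := by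
  rw [PowerSeries.X_pow_dvd_iff]
  intro k hk
  rw [map_sub, padeNum_eq_trunc, Polynomial.coeff_coe, PowerSeries.coeff_trunc, if_pos hk,
    sub_self]

lemma choose_add_pos {ν : ℚ} (hν : -1 < ν) (r : ℕ) : 0 < Ring.choose ((r : ℚ) + ν) r := by
  induction r with
  | zero => simp
  | succ r ih =>
    have : (0 : ℚ) ≤ r := by positivity
    rw [show ((r + 1 : ℕ) : ℚ) + ν = r + ν + 1 by push_cast; ring]
    refine pos_of_mul_pos_right (a := (r : ℚ) + 1) ?_ (by positivity)
    rw [succ_mul_choose_succ_succ]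
    exact mul_pos (by linarith) ih

lemma coeff_padeNum_mul_padeDenom_succ_sub_ne_zero {ν : ℚ} (h0 : 0 < ν) (h1 : ν < 1) (r : ℕ) :
    (padeNum ν r * padeDenom ν (r + 1) - padeNum ν (r + 1) * padeDenom ν r).coeff (2 * r + 1) ≠
      0 := by
  have hdiag (s : ℕ) : (padeDenom ν s).coeff s = Ring.choose ((s : ℚ) - ν) s := by
    rw [coeff_padeDenom ν le_rfl, two_mul, Nat.add_sub_cancel, Nat.choose_self, Nat.cast_one,
      mul_one]
  have e₁ := coeff_mul_add_eq_of_natDegree_le (natDegree_padeNum_le ν r)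
    (natDegree_padeDenom_le ν (r + 1))
  have e₂ := coeff_mul_add_eq_of_natDegree_le (natDegree_padeNum_le ν (r + 1))
    (natDegree_padeDenom_le ν r)
  rw [show r + (r + 1) = 2 * r + 1 by ring, hdiag, coeff_padeNum_self] at e₁
  rw [show (r + 1) + r = 2 * r + 1 by ring, hdiag, coeff_padeNum_self] at e₂
  rw [coeff_sub, e₁, e₂]
  have hplus := succ_mul_choose_succ_succ (r + ν) r
  have hminus := succ_mul_choose_succ_succ (r - ν) r
  have hpos : 0 < 2 * ν * (Ring.choose (r + ν) r * Ring.choose (r - ν) r) :=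
    mul_pos (by linarith) (mul_pos (choose_add_pos (by linarith) r)
      (by simpa [sub_eq_add_neg] using choose_add_pos (ν := -ν) (by linarith) r))
  push_cast
  rw [show (r : ℚ) + 1 - ν = r - ν + 1 by ring, show (r : ℚ) + 1 + ν = r + ν + 1 by ring]
  intro h
  refine hpos.ne' ?_
  linear_combination (-(r : ℚ) - 1) * h + Ring.choose (r + ν) r * hminus -
    Ring.choose (r - ν) r * hplus

lemma padeNum_mul_padeDenom_succ_sub {ν : ℚ} (h0 : 0 < ν) (h1 : ν < 1) (r : ℕ) :
    ∃ c ≠ 0, padeNum ν r * padeDenom ν (r + 1) - padeNum ν (r + 1) * padeDenom ν r =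
      C c * X ^ (2 * r + 1) := by
  refine ⟨_, coeff_padeNum_mul_padeDenom_succ_sub_ne_zero h0 h1 r, ?_⟩
  set W := padeNum ν r * padeDenom ν (r + 1) - padeNum ν (r + 1) * padeDenom ν r with hW
  have hdegree : W.natDegree ≤ 2 * r + 1 := by
    refine (natDegree_sub_le_of_le
      (natDegree_mul_le_of_le (natDegree_padeNum_le ν r) (natDegree_padeDenom_le ν (r + 1)))
      (natDegree_mul_le_of_le (natDegree_padeNum_le ν (r + 1)) (natDegree_padeDenom_le ν r))).trans
      (by omega)
  have hdvd : (PowerSeries.X : PowerSeries ℚ) ^ (2 * r + 1) ∣ W := by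
    have hr := X_pow_dvd_padeSeries_sub ν r
    have hr' := (pow_dvd_pow PowerSeries.X (show 2 * r + 1 ≤ 2 * (r + 1) + 1 by omega)).trans
      (X_pow_dvd_padeSeries_sub ν (r + 1))
    convert dvd_sub (hr'.mul_right (padeDenom ν r : PowerSeries ℚ))
      (hr.mul_right (padeDenom ν (r + 1) : PowerSeries ℚ)) using 1
    rw [hW, padeSeries, padeSeries]
    push_cast
    ring
  ext k
  rw [coeff_C_mul, coeff_X_pow]
  obtain hk | rfl | hk := lt_trichotomy k (2 * r + 1)
  · rw [if_neg hk.ne, mul_zero, ← Polynomial.coeff_coe]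
    exact PowerSeries.X_pow_dvd_iff.mp hdvd k hk
  · rw [if_pos rfl, mul_one]
  · rw [if_neg hk.ne', mul_zero, coeff_eq_zero_of_natDegree_lt (hdegree.trans_lt hk)]

lemma pade_ne_or_pade_succ_ne {A : Type*} [Field A] [Algebra ℚ A] {ν : ℚ} (h0 : 0 < ν)
    (h1 : ν < 1) (r : ℕ) {x D E : A} (hx : x ≠ 0) (hE : E ≠ 0) :
    aeval x (padeNum ν r) * E ≠ aeval x (padeDenom ν r) * D ∨
      aeval x (padeNum ν (r + 1)) * E ≠ aeval x (padeDenom ν (r + 1)) * D := by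
  by_contra! h
  obtain ⟨c, hc, hdet⟩ := padeNum_mul_padeDenom_succ_sub h0 h1 r
  have hx' := congrArg (aeval x) hdet
  simp only [map_sub, map_mul, map_pow, aeval_C, aeval_X] at hx'
  refine mul_ne_zero (mul_ne_zero ((map_ne_zero (algebraMap ℚ A)).mpr hc)
    (pow_ne_zero (2 * r + 1) hx)) hE ?_
  rw [← hx']
  linear_combination aeval x (padeDenom ν (r + 1)) * h.1 - aeval x (padeDenom ν r) * h.2

lemma hasSum_coeff_mul_coe {R A : Type*} [CommSemiring R] [CommSemiring A] [Algebra R A]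
    [TopologicalSpace A] [IsTopologicalSemiring A] {φ : PowerSeries R} {x s : A}
    (h : HasSum (fun k ↦ algebraMap R A (PowerSeries.coeff k φ) * x ^ k) s) (Q : R[X]) :
    HasSum (fun k ↦ algebraMap R A (PowerSeries.coeff k (φ * (Q : PowerSeries R))) * x ^ k)
      (s * aeval x Q) := by
  induction Q using Polynomial.induction_on' with
  | add P Q hP hQ =>
    simpa only [Polynomial.coe_add, mul_add, map_add, add_mul] using hP.add hQ
  | monomial n a =>
    have hcoeff (k : ℕ) : PowerSeries.coeff k (φ * ((monomial n a : R[X]) : PowerSeries R)) =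
        if n ≤ k then PowerSeries.coeff (k - n) φ * a else 0 := by
      rw [← C_mul_X_pow_eq_monomial, Polynomial.coe_mul, Polynomial.coe_pow, Polynomial.coe_X,
        Polynomial.coe_C, ← mul_assoc, PowerSeries.coeff_mul_X_pow', PowerSeries.coeff_mul_C]
    rw [aeval_monomial, ← (add_left_injective n).hasSum_iff]
    · refine (h.mul_right (algebraMap R A a * x ^ n)).congr_fun fun k ↦ ?_
      rw [Function.comp_apply, hcoeff, if_pos (Nat.le_add_left n k), Nat.add_sub_cancel,
        map_mul, pow_add]
      ring
    · intro k hk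
      rw [hcoeff, if_neg fun hn ↦ hk ⟨k - n, Nat.sub_add_cancel hn⟩, map_zero, zero_mul]

lemma hasSum_choose_mul_pow (ν : ℚ) {x : ℂ} (hx : ‖x‖ < 1) :
    HasSum (fun k ↦ algebraMap ℚ ℂ (PowerSeries.coeff k (PowerSeries.binomialSeries ℚ ν)) * x ^ k)
      ((1 + x) ^ (ν : ℂ)) := by
  have h := Complex.one_add_cpow_hasFPowerSeriesOnBall_zero (a := (ν : ℂ)).hasSum (y := x)
    (by simpa [enorm_eq_nnnorm, ← NNReal.coe_lt_coe] using hx)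
  simp only [binomialSeries_apply, zero_add, List.ofFn_const, List.prod_replicate,
    smul_eq_mul] at h
  simpa only [PowerSeries.binomialSeries_coeff, smul_eq_mul, mul_one, Ring.map_choose,
    eq_ratCast] using h

lemma norm_sub_aeval_trunc_le {φ : PowerSeries ℚ} {x s : ℂ} {N : ℕ}
    (hs : HasSum (fun k ↦ algebraMap ℚ ℂ (PowerSeries.coeff k φ) * x ^ k) s) (hx : ‖x‖ ≤ 1 / 4)
    (hφ : ∀ d, |PowerSeries.coeff (N + d) φ| ≤ 2 ^ d) :
    ‖s - aeval x (φ.trunc N)‖ ≤ 2 * ‖x‖ ^ N := by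
  have htrunc : aeval x (φ.trunc N) =
      ∑ k ∈ range N, algebraMap ℚ ℂ (PowerSeries.coeff k φ) * x ^ k := by
    simp [aeval_def, PowerSeries.eval₂_trunc_eq_sum_range]
  rw [← hasSum_nat_add_iff' N, ← htrunc] at hs
  rw [← hs.tsum_eq, mul_comm]
  refine tsum_of_norm_bounded (hasSum_geometric_two.mul_left (‖x‖ ^ N)) fun d ↦ ?_
  have hcoeff : ‖algebraMap ℚ ℂ (PowerSeries.coeff (d + N) φ)‖ ≤ 2 ^ d := by
    rw [eq_ratCast, Complex.norm_ratCast, add_comm d N]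
    exact_mod_cast hφ d
  calc _ = ‖x‖ ^ N * (‖algebraMap ℚ ℂ (PowerSeries.coeff (d + N) φ)‖ * ‖x‖ ^ d) := by
        rw [norm_mul, norm_pow, pow_add]
        ring
    _ ≤ ‖x‖ ^ N * (2 ^ d * (1 / 4) ^ d) := by gcongr
    _ = ‖x‖ ^ N * (1 / 2) ^ d := by rw [← mul_pow]; norm_num

lemma norm_cpow_mul_padeDenom_sub_padeNum_le {ν : ℚ} (h0 : 0 ≤ ν) (h1 : ν ≤ 1) (r : ℕ) {x : ℂ}
    (hx : ‖x‖ ≤ 1 / 4) :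
    ‖(1 + x) ^ (ν : ℂ) * aeval x (padeDenom ν r) - aeval x (padeNum ν r)‖ ≤
      2 * ‖x‖ ^ (2 * r + 1) := by
  rw [padeNum_eq_trunc]
  refine norm_sub_aeval_trunc_le
    (hasSum_coeff_mul_coe (hasSum_choose_mul_pow ν (by linarith)) _) hx fun d ↦ ?_
  have hd : (d : ℚ) + 1 ≤ 2 ^ d := by exact_mod_cast Nat.lt_two_pow_self
  exact (abs_coeff_padeSeries_le h0 h1 r d).trans hd

end Pade

section Eisenstein

open Finset

lemma dvd_prod_sub_mul {p u : ℤ} (hpu : IsCoprime p u) {k : ℕ} (hu : u ∣ k.factorial) (a : ℤ) :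
    u ∣ ∏ i ∈ range k, (a - p * i) := by
  obtain ⟨x, y, hxy⟩ := hpu
  have hmod : ∏ i ∈ range k, (a - p * i) ≡ ∏ i ∈ range k, (p * (x * a - i)) [ZMOD u] :=
    Int.ModEq.prod fun i _ ↦ Int.modEq_iff_dvd.mpr ⟨-(y * a), by linear_combination a * hxy⟩
  have hfactorial : (k.factorial : ℤ) ∣ ∏ i ∈ range k, (x * a - i) := by
    rw [← descPochhammer_eval_eq_prod_range, Polynomial.eval_eq_smeval,
      Ring.descPochhammer_eq_factorial_smul_choose, nsmul_eq_mul]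
    exact dvd_mul_right _ _
  rw [← Int.modEq_zero_iff_dvd]
  refine hmod.trans (Int.modEq_zero_iff_dvd.mpr ?_)
  rw [prod_mul_distrib]
  exact (hu.trans hfactorial).mul_left _

lemma pow_mul_factorial_mul_choose_div {K : Type*} [Field K] [CharZero K] [BinomialRing K]
    {p : K} (hp : p ≠ 0) (a : K) (k : ℕ) :
    p ^ k * k.factorial * Ring.choose (a / p) k = ∏ i ∈ range k, (a - p * i) := by
  induction k with
  | zero => simp
  | succ k ih =>
    have h := choose_succ_mul_succ (a / p) k
    rw [prod_range_succ, ← ih, Nat.factorial_succ]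
    push_cast
    have hpa : p * (a / p) = a := mul_div_cancel₀ a hp
    linear_combination p ^ (k + 1) * k.factorial * h +
      p ^ k * k.factorial * Ring.choose (a / p) k * hpa

lemma exists_int_eq_pow_mul_choose_div (p : ℕ) [Fact p.Prime] (a : ℤ) (k : ℕ) :
    ∃ z : ℤ, (p : ℚ) ^ (k + padicValNat p k.factorial) * Ring.choose ((a : ℚ) / p) k = z := by
  have hp : p.Prime := Fact.out
  have hfactor := Nat.ordProj_mul_ordCompl_eq_self k.factorial p
  have hcoprime := Nat.coprime_ordCompl hp k.factorial_ne_zero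
  rw [Nat.factorization_def _ hp] at hfactor hcoprime
  set v := padicValNat p k.factorial
  set u := k.factorial / p ^ v
  have hu : (u : ℚ) ≠ 0 := by
    rw [Nat.cast_ne_zero]
    rintro h
    exact k.factorial_ne_zero (by rw [← hfactor, h, mul_zero])
  obtain ⟨z, hz⟩ := dvd_prod_sub_mul (Nat.isCoprime_iff_coprime.mpr hcoprime)
    (Int.natCast_dvd_natCast.mpr (Dvd.intro_left _ hfactor)) a
  have hprod := pow_mul_factorial_mul_choose_div (Nat.cast_ne_zero.mpr hp.ne_zero) (a : ℚ) k
  have hz' : ∏ i ∈ range k, ((a : ℚ) - p * i) = u * z := by exact_mod_cast hz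
  refine ⟨z, mul_left_cancel₀ hu ?_⟩
  rw [← hz', ← hprod, ← hfactor]
  push_cast
  ring

/-- The primitive cube root of unity in the upper half-plane. -/
noncomputable def ω : ℂ := ⟨-1 / 2, √3 / 2⟩

lemma ω_sq : ω ^ 2 = -1 - ω := by
  have h : √3 * √3 = 3 := Real.mul_self_sqrt (by norm_num)
  apply Complex.ext <;> simp [ω, pow_two] <;> linarith

lemma conj_ω : conj ω = -1 - ω := by
  apply Complex.ext <;> simp [ω]
  norm_num

/-- The ring `ℤ[ω]` of Eisenstein integers, as a subring of `ℂ`. -/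
noncomputable def eisensteinIntegers : Subring ℂ where
  carrier := {z | ∃ a b : ℤ, z = a + b * ω}
  mul_mem' := by
    rintro _ _ ⟨a, b, rfl⟩ ⟨c, d, rfl⟩
    refine ⟨a * c - b * d, a * d + b * c - b * d, ?_⟩
    push_cast
    linear_combination (b : ℂ) * d * ω_sq
  one_mem' := ⟨1, 0, by simp⟩
  add_mem' := by
    rintro _ _ ⟨a, b, rfl⟩ ⟨c, d, rfl⟩
    exact ⟨a + c, b + d, by push_cast; ring⟩
  zero_mem' := ⟨0, 0, by simp⟩
  neg_mem' := by
    rintro _ ⟨a, b, rfl⟩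
    exact ⟨-a, -b, by push_cast; ring⟩

lemma conj_mem_eisensteinIntegers {z : ℂ} (hz : z ∈ eisensteinIntegers) :
    conj z ∈ eisensteinIntegers := by
  obtain ⟨a, b, rfl⟩ := hz
  refine ⟨a - b, -b, ?_⟩
  simp only [map_add, map_mul, map_intCast, conj_ω]
  push_cast
  ring

lemma normSq_add_mul_ω (x y : ℝ) : Complex.normSq (x + y * ω) = x ^ 2 - x * y + y ^ 2 := by
  have h : √3 * √3 = 3 := Real.mul_self_sqrt (by norm_num)
  simp only [Complex.normSq_apply, ω, Complex.add_re, Complex.ofReal_re, Complex.re_ofReal_mul,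
    Complex.add_im, Complex.ofReal_im, Complex.im_ofReal_mul]
  linear_combination y ^ 2 / 4 * h

lemma one_le_norm_of_mem_eisensteinIntegers {z : ℂ} (hz : z ∈ eisensteinIntegers)
    (hz0 : z ≠ 0) : 1 ≤ ‖z‖ := by
  obtain ⟨a, b, rfl⟩ := hz
  have hnorm : Complex.normSq (a + b * ω) = (a ^ 2 - a * b + b ^ 2 : ℤ) := by
    push_cast
    exact_mod_cast normSq_add_mul_ω a b
  have hpos : 0 < Complex.normSq (a + b * ω) := Complex.normSq_pos.mpr hz0
  rw [hnorm, Int.cast_pos] at hpos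
  rw [← one_le_sq_iff₀ (norm_nonneg _), ← Complex.normSq_eq_norm_sq, hnorm]
  exact_mod_cast hpos

/-- The square root of `-3` in the upper half-plane. -/
noncomputable def θ : ℂ := 2 * ω + 1

lemma θ_sq : θ ^ 2 = -3 := by
  rw [θ]
  linear_combination 4 * ω_sq

lemma norm_θ : ‖θ‖ = √3 := by
  have h := congrArg norm θ_sq
  rw [norm_pow, norm_neg, Complex.norm_ofNat] at h
  rw [← h, Real.sqrt_sq (norm_nonneg _)]

lemma θ_ne_zero : θ ≠ 0 := by
  rw [← norm_pos_iff, norm_θ]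
  positivity

lemma θ_mem_eisensteinIntegers : θ ∈ eisensteinIntegers := ⟨1, 2, by rw [θ]; push_cast; ring⟩

lemma θ_pow_mul_choose_mem (a : ℤ) (k : ℕ) :
    θ ^ (3 * k) * algebraMap ℚ ℂ (Ring.choose ((a : ℚ) / 3) k) ∈ eisensteinIntegers := by
  have : Fact (Nat.Prime 3) := ⟨Nat.prime_three⟩
  obtain ⟨z, hz⟩ := exists_int_eq_pow_mul_choose_div 3 a k
  have hv := sub_one_mul_padicValNat_factorial (p := 3) k
  set v := padicValNat 3 k.factorial
  have hθ : θ ^ (3 * k) = θ ^ (k - 2 * v) * (-1) ^ (k + v) * 3 ^ (k + v) := by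
    rw [mul_assoc, ← mul_pow, show (-1 : ℂ) * 3 = θ ^ 2 by rw [θ_sq]; norm_num, ← pow_mul,
      ← pow_add]
    congr 1
    omega
  have hz' : (3 : ℂ) ^ (k + v) * algebraMap ℚ ℂ (Ring.choose ((a : ℚ) / 3) k) = z := by
    simpa using congrArg (algebraMap ℚ ℂ) hz
  rw [hθ, mul_assoc, hz']
  exact mul_mem (mul_mem (pow_mem θ_mem_eisensteinIntegers _) (pow_mem (neg_mem (one_mem _)) _))
    (intCast_mem _ z)

lemma θ_pow_mul_coeff_padeDenom_mem (r j : ℕ) :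
    θ ^ (3 * j) * algebraMap ℚ ℂ ((padeDenom (1 / 3) r).coeff j) ∈ eisensteinIntegers := by
  obtain hj | hj := le_or_gt j r
  · have hr : (r : ℚ) - 1 / 3 = ((3 * r - 1 : ℤ) : ℚ) / 3 := by push_cast; ring
    rw [coeff_padeDenom _ hj, hr, map_mul, map_natCast, ← mul_assoc]
    exact mul_mem (θ_pow_mul_choose_mem _ j) (natCast_mem _ _)
  · rw [coeff_eq_zero_of_natDegree_lt ((natDegree_padeDenom_le _ r).trans_lt hj), map_zero,
      mul_zero]
    exact zero_mem _

lemma θ_pow_mul_coeff_padeNum_mem (r k : ℕ) :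
    θ ^ (3 * k) * algebraMap ℚ ℂ ((padeNum (1 / 3) r).coeff k) ∈ eisensteinIntegers := by
  rw [padeNum, PowerSeries.coeff_trunc]
  split_ifs
  · rw [coeff_padeSeries, map_sum, mul_sum]
    refine sum_mem fun p hp ↦ ?_
    have h := mul_mem (θ_pow_mul_choose_mem 1 p.1) (θ_pow_mul_coeff_padeDenom_mem r p.2)
    rw [Int.cast_one] at h
    convert h using 1
    rw [← mem_antidiagonal.mp hp, map_mul, mul_add, pow_add]
    ring
  · rw [map_zero, mul_zero]
    exact zero_mem _

lemma pow_mul_aeval_div_mem {R F : Type*} [CommRing R] [Field F] [Algebra R F] {S : Subring F}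
    {s t : F} {p : R[X]} {r : ℕ} (hp : ∀ j, s ^ j * algebraMap R F (p.coeff j) ∈ S)
    (ht : t ∈ S) (ht0 : t ≠ 0) (hr : p.natDegree ≤ r) : t ^ r * aeval (s / t) p ∈ S := by
  rw [aeval_eq_sum_range' (Nat.lt_succ_iff.mpr hr), mul_sum]
  refine sum_mem fun j hj ↦ ?_
  obtain ⟨i, rfl⟩ := Nat.exists_eq_add_of_le (mem_range_succ_iff.mp hj)
  convert mul_mem (hp j) (pow_mem ht i) using 1
  rw [Algebra.smul_def, div_pow, pow_add]
  field_simp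

lemma abs_coeff_padeDenom_le {ν : ℚ} (h0 : 0 ≤ ν) (h1 : ν ≤ 1) {r j : ℕ} (hj : j ≤ r) :
    |(padeDenom ν r).coeff j| ≤ r.choose j * 4 ^ r := by
  have hcentral : ((2 * r - j).choose r : ℚ) ≤ 4 ^ r := by
    have h : (2 * r - j).choose r ≤ 2 ^ (2 * r) :=
      (Nat.choose_le_two_pow _ _).trans (Nat.pow_le_pow_right two_pos (Nat.sub_le _ _))
    rw [pow_mul] at h
    exact_mod_cast h
  rw [coeff_padeDenom ν hj, abs_mul, abs_of_nonneg (choose_sub_nonneg h1 hj), Nat.abs_cast]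
  gcongr
  exact choose_sub_le_natChoose h0 h1 hj

lemma norm_pow_mul_aeval_div_padeDenom_le {ν : ℚ} (h0 : 0 ≤ ν) (h1 : ν ≤ 1) (r : ℕ) (s : ℂ)
    {t : ℂ} (ht : t ≠ 0) :
    ‖t ^ r * aeval (s / t) (padeDenom ν r)‖ ≤ (4 * (‖s‖ + ‖t‖)) ^ r := by
  rw [aeval_eq_sum_range' (Nat.lt_succ_iff.mpr (natDegree_padeDenom_le ν r)), mul_sum, mul_pow,
    add_pow, mul_sum]
  refine norm_sum_le_of_le _ fun j hj ↦ ?_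
  have hj := mem_range_succ_iff.mp hj
  have hcoeff : ‖algebraMap ℚ ℂ ((padeDenom ν r).coeff j)‖ ≤ r.choose j * 4 ^ r := by
    rw [eq_ratCast, Complex.norm_ratCast]
    exact_mod_cast abs_coeff_padeDenom_le h0 h1 hj
  calc _ = ‖algebraMap ℚ ℂ ((padeDenom ν r).coeff j)‖ * (‖s‖ ^ j * ‖t‖ ^ (r - j)) := by
        rw [← norm_pow, ← norm_pow, ← norm_mul, ← norm_mul, Algebra.smul_def, div_pow,
          ← pow_sub_mul_pow t hj]
        congr 1
        field_simp
    _ ≤ r.choose j * 4 ^ r * (‖s‖ ^ j * ‖t‖ ^ (r - j)) := by gcongr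
    _ = 4 ^ r * (‖s‖ ^ j * ‖t‖ ^ (r - j) * r.choose j) := by ring

end Eisenstein

section CubeRootApproximation

lemma norm_θ_pow_three_le : ‖θ ^ 3‖ ≤ 6 := by
  rw [norm_pow, norm_θ]
  have h : √3 ≤ 1.8 := Real.sqrt_le_iff.mpr (by norm_num)
  calc √3 ^ 3 ≤ 1.8 ^ 3 := by gcongr
    _ ≤ 6 := by norm_num

lemma one_le_norm_aeval_padeNum_sub {t D E : ℂ} (ht : t ∈ eisensteinIntegers)
    (hD : D ∈ eisensteinIntegers) (hE : E ∈ eisensteinIntegers) (ht0 : t ≠ 0) {r : ℕ}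
    (hne : aeval (θ ^ 3 / t) (padeNum (1 / 3) r) * E ≠
      aeval (θ ^ 3 / t) (padeDenom (1 / 3) r) * D) :
    1 ≤ ‖t ^ r * aeval (θ ^ 3 / t) (padeNum (1 / 3) r) * E -
      t ^ r * aeval (θ ^ 3 / t) (padeDenom (1 / 3) r) * D‖ := by
  have hP := pow_mul_aeval_div_mem (fun j ↦ pow_mul θ 3 j ▸ θ_pow_mul_coeff_padeNum_mem r j) ht ht0
    (natDegree_padeNum_le _ r)
  have hQ := pow_mul_aeval_div_mem (fun j ↦ pow_mul θ 3 j ▸ θ_pow_mul_coeff_padeDenom_mem r j) ht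
    ht0 (natDegree_padeDenom_le _ r)
  refine one_le_norm_of_mem_eisensteinIntegers (sub_mem (mul_mem hP hE) (mul_mem hQ hD)) ?_
  rw [mul_assoc, mul_assoc, ← mul_sub]
  exact mul_ne_zero (pow_ne_zero r ht0) (sub_ne_zero.mpr hne)

lemma norm_cpow_mul_padeDenom_div_sub_le {t : ℂ} (ht : 24 ≤ ‖t‖) (r : ℕ) :
    ‖t‖ ^ r * ‖(1 + θ ^ 3 / t) ^ (1 / 3 : ℂ) * aeval (θ ^ 3 / t) (padeDenom (1 / 3) r) -
      aeval (θ ^ 3 / t) (padeNum (1 / 3) r)‖ ≤ (27 / ‖t‖) ^ r / 2 := by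
  have ht0 : 0 < ‖t‖ := by linarith
  have hx : ‖θ ^ 3 / t‖ ≤ 1 / 4 := by
    rw [norm_div, div_le_iff₀ ht0]
    linarith [norm_θ_pow_three_le]
  have hx2 : ‖θ ^ 3 / t‖ ^ 2 * ‖t‖ = 27 / ‖t‖ := by
    have h : ‖θ ^ 3‖ ^ 2 = 27 := by
      rw [norm_pow, norm_θ, pow_right_comm, Real.sq_sqrt (by norm_num)]
      norm_num
    rw [norm_div, div_pow, h]
    field_simp
  have happrox :=
    norm_cpow_mul_padeDenom_sub_padeNum_le (ν := 1 / 3) (by norm_num) (by norm_num) r hx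
  push_cast at happrox
  calc _ ≤ ‖t‖ ^ r * (2 * ‖θ ^ 3 / t‖ ^ (2 * r + 1)) := by gcongr
    _ = 2 * ‖θ ^ 3 / t‖ * (‖θ ^ 3 / t‖ ^ 2 * ‖t‖) ^ r := by ring
    _ ≤ 2 * (1 / 4) * (27 / ‖t‖) ^ r := by rw [hx2]; gcongr
    _ = (27 / ‖t‖) ^ r / 2 := by ring

lemma one_le_pow_mul_norm_cpow_mul_sub {t D E : ℂ} (ht : t ∈ eisensteinIntegers)
    (hD : D ∈ eisensteinIntegers) (hE : E ∈ eisensteinIntegers) (htn : 24 ≤ ‖t‖) {r : ℕ}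
    (hne : aeval (θ ^ 3 / t) (padeNum (1 / 3) r) * E ≠
      aeval (θ ^ 3 / t) (padeDenom (1 / 3) r) * D) :
    1 ≤ (4 * (‖t‖ + 6)) ^ r * ‖(1 + θ ^ 3 / t) ^ (1 / 3 : ℂ) * E - D‖ +
      (27 / ‖t‖) ^ r / 2 * ‖E‖ := by
  have ht0 : t ≠ 0 := norm_pos_iff.mp (by linarith)
  set y := (1 + θ ^ 3 / t) ^ (1 / 3 : ℂ)
  set P := aeval (θ ^ 3 / t) (padeNum (1 / 3) r)
  set Q := aeval (θ ^ 3 / t) (padeDenom (1 / 3) r)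
  have hQle : ‖t ^ r * Q‖ ≤ (4 * (‖t‖ + 6)) ^ r := by
    refine (norm_pow_mul_aeval_div_padeDenom_le (by norm_num) (by norm_num) r _ ht0).trans ?_
    rw [add_comm]
    gcongr
    exact norm_θ_pow_three_le
  calc 1 ≤ ‖t ^ r * P * E - t ^ r * Q * D‖ := one_le_norm_aeval_padeNum_sub ht hD hE ht0 hne
    _ = ‖t ^ r * Q * (y * E - D) - t ^ r * (y * Q - P) * E‖ := by ring_nf
    _ ≤ ‖t ^ r * Q‖ * ‖y * E - D‖ + ‖t‖ ^ r * ‖y * Q - P‖ * ‖E‖ := by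
      refine (norm_sub_le _ _).trans_eq ?_
      simp only [norm_mul, norm_pow]
    _ ≤ _ := by
      gcongr
      exact norm_cpow_mul_padeDenom_div_sub_le htn r

section Parameters

variable {A B N : ℝ}

lemma mul_inv_pow_lt_one (hA : 1 ≤ A) (hB3 : B ^ 3 ≤ 432 * A * N) {r k : ℕ}
    (hr : 27648 * A * N < (A ^ 3) ^ r) (hk : r ≤ k) : 4 * B * A⁻¹ ^ k < 1 := by
  have : 0 < A := by linarith
  rw [inv_pow, ← div_eq_mul_inv, div_lt_one (by positivity)]
  refine lt_of_pow_lt_pow_left₀ 3 (by positivity) ?_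
  calc (4 * B) ^ 3 = 64 * B ^ 3 := by ring
    _ ≤ 27648 * A * N := by linarith
    _ < (A ^ 3) ^ r := hr
    _ ≤ (A ^ 3) ^ k := pow_le_pow_right₀ (one_le_pow₀ hA) hk
    _ = (A ^ k) ^ 3 := pow_right_comm A 3 k

-- The bound `1138` is the least integer `N` with `109 ^ 3 ≤ N ^ 2`.
lemma mul_pow_lt_of_pow_lt (hA : 1138 ≤ A) (hB : 0 ≤ B) (hN0 : 0 < N) (hN : A ^ 54 < N)
    (hB3 : B ^ 3 ≤ 432 * A * N) {r k : ℕ} (hr : (A ^ 3) ^ r ≤ 27648 * A * N) (hk : k ≤ r + 2) :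
    4 * B * (4 * (27 * A + 6)) ^ k < N := by
  have hA2 : 1138 ^ 2 ≤ A ^ 2 := by gcongr
  have hA3 : 27648 * A ≤ A ^ 3 := by nlinarith
  have hbase : (4 * (27 * A + 6)) ^ 3 ≤ A ^ 5 :=
    calc (4 * (27 * A + 6)) ^ 3 ≤ (109 * A) ^ 3 := pow_le_pow_left₀ (by linarith) (by linarith) 3
      _ = 1295029 * A ^ 3 := by ring
      _ ≤ A ^ 2 * A ^ 3 := by gcongr; linarith
      _ = A ^ 5 := by ring
  have hcube : (4 * B * (4 * (27 * A + 6)) ^ k) ^ 3 ≤ A ^ 3 * N * A ^ (5 * (r + 2)) :=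
    calc (4 * B * (4 * (27 * A + 6)) ^ k) ^ 3
        = 64 * B ^ 3 * ((4 * (27 * A + 6)) ^ 3) ^ k := by rw [mul_pow, pow_right_comm]; ring
      _ ≤ 64 * (432 * A * N) * (A ^ 5) ^ k := by gcongr
      _ = 27648 * A * N * A ^ (5 * k) := by ring
      _ ≤ A ^ 3 * N * A ^ (5 * (r + 2)) := by
        gcongr
        linarith
  refine lt_of_pow_lt_pow_left₀ 9 hN0.le ?_
  calc (4 * B * (4 * (27 * A + 6)) ^ k) ^ 9
      = ((4 * B * (4 * (27 * A + 6)) ^ k) ^ 3) ^ 3 := by ring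
    _ ≤ (A ^ 3 * N * A ^ (5 * (r + 2))) ^ 3 := by gcongr
    _ = A ^ 39 * N ^ 3 * ((A ^ 3) ^ r) ^ 5 := by ring
    _ ≤ A ^ 39 * N ^ 3 * (A ^ 3 * N) ^ 5 := by gcongr; exact hr.trans (by gcongr)
    _ = A ^ 54 * N ^ 8 := by ring
    _ < N * N ^ 8 := by gcongr
    _ = N ^ 9 := by ring

lemma exists_forall_mul_inv_pow_lt_one_and_mul_pow_lt (hA : 1138 ≤ A) (hB : 0 ≤ B)
    (hN : A ^ 54 < N) (hB3 : B ^ 3 ≤ 432 * A * N) :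
    ∃ r, ∀ k, r ≤ k → k ≤ r + 1 → 4 * B * A⁻¹ ^ k < 1 ∧ 4 * B * (4 * (27 * A + 6)) ^ k < N := by
  have hA1 : 1 ≤ A := by linarith
  have hN1 : 1 < N := (one_le_pow₀ hA1).trans_lt hN
  obtain ⟨r, hr, hr'⟩ := exists_nat_pow_near (x := 27648 * A * N) (y := A ^ 3) (by nlinarith)
    (one_lt_pow₀ (by linarith) three_ne_zero)
  exact ⟨r + 1, fun k hk hk' ↦ ⟨mul_inv_pow_lt_one hA1 hB3 hr' hk,
    mul_pow_lt_of_pow_lt hA hB (by linarith) hN hB3 hr hk'⟩⟩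

end Parameters

lemma two_mul_norm_div_lt_norm_cpow_mul_sub {t D E : ℂ} (ht : t ∈ eisensteinIntegers)
    (hD : D ∈ eisensteinIntegers) (hE : E ∈ eisensteinIntegers) (hE0 : E ≠ 0) {N : ℝ}
    (htn : 27 * 1138 ≤ ‖t‖) (hEN : ‖E‖ ^ 3 ≤ 16 * ‖t‖ * N) (hN : (‖t‖ / 27) ^ 54 < N) :
    2 * ‖E‖ / N < ‖(1 + θ ^ 3 / t) ^ (1 / 3 : ℂ) * E - D‖ := by
  have hN0 : 0 < N := lt_of_le_of_lt (by positivity) hN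
  have ht0 : 0 < ‖t‖ := by linarith
  obtain ⟨r, hr⟩ := exists_forall_mul_inv_pow_lt_one_and_mul_pow_lt (A := ‖t‖ / 27) (B := ‖E‖)
    (by linarith) (norm_nonneg E) hN (by linarith)
  rw [inv_div, mul_div_cancel₀ ‖t‖ (by norm_num)] at hr
  have hstep : ∀ k, r ≤ k → k ≤ r + 1 → aeval (θ ^ 3 / t) (padeNum (1 / 3) k) * E ≠
      aeval (θ ^ 3 / t) (padeDenom (1 / 3) k) * D →
      2 * ‖E‖ / N < ‖(1 + θ ^ 3 / t) ^ (1 / 3 : ℂ) * E - D‖ := by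
    intro k hrk hkr hne
    obtain ⟨h1, h2⟩ := hr k hrk hkr
    have h := one_le_pow_mul_norm_cpow_mul_sub ht hD hE (by linarith) hne
    by_contra! hle
    have hsmall : (4 * (‖t‖ + 6)) ^ k * (2 * ‖E‖ / N) < 1 / 2 := by
      rw [← mul_div_assoc, div_lt_iff₀ hN0]
      linarith
    have := mul_le_mul_of_nonneg_left hle (by positivity : 0 ≤ (4 * (‖t‖ + 6)) ^ k)
    linarith
  have hx : θ ^ 3 / t ≠ 0 := div_ne_zero (pow_ne_zero 3 θ_ne_zero) (norm_pos_iff.mp ht0)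
  rcases pade_ne_or_pade_succ_ne (ν := 1 / 3) (by norm_num) (by norm_num) r hx hE0 (D := D)
    with hne | hne
  · exact hstep r le_rfl (by lia) hne
  · exact hstep (r + 1) (by lia) le_rfl hne

end CubeRootApproximation

section Polynomial

lemma aeval_f {A : Type*} [CommRing A] [Algebra ℚ A] (m : ℤ) (x : A) :
    aeval x (f m) = x ^ 3 - m * x ^ 2 - (m + 3) * x - 1 := by
  simp [f, map_ofNat (algebraMap ℚ A) 3]

lemma natDegree_f (m : ℤ) : (f m).natDegree = 3 := by
  rw [f]
  compute_degree!

lemma monic_f (m : ℤ) : (f m).Monic := by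
  rw [f]
  monicity!

/-- The Möbius map `x ↦ -1 / (1 + x)` of order three; it permutes the roots of every `f m`. -/
def rootShift {K : Type*} [Field K] (x : K) : K := -1 / (1 + x)

lemma map_rootShift {K K' F : Type*} [Field K] [Field K'] [FunLike F K K'] [RingHomClass F K K']
    (φ : F) (x : K) : φ (rootShift x) = rootShift (φ x) := by
  simp [rootShift]

section Field

variable {K : Type*} [Field K] {x : K}

lemma one_add_rootShift (h1 : 1 + x ≠ 0) : 1 + rootShift x = x / (1 + x) := by
  rw [rootShift]
  field_simp
  ring

lemma rootShift_rootShift (h0 : x ≠ 0) (h1 : 1 + x ≠ 0) :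
    rootShift (rootShift x) = -(1 + x) / x := by
  rw [rootShift, one_add_rootShift h1]
  field_simp

lemma rootShift_inv_rootShift_rootShift (h0 : x ≠ 0) (h1 : 1 + x ≠ 0) :
    (rootShift (rootShift x))⁻¹ = rootShift x⁻¹ := by
  have h : 1 + x⁻¹ = (1 + x) / x := by
    field_simp
    ring
  rw [rootShift_rootShift h0 h1, rootShift, h]
  field_simp

variable [Algebra ℚ K] {m : ℤ} (hx : aeval x (f m) = 0)
include hx

lemma ne_zero_of_aeval_f : x ≠ 0 := by
  rintro rfl
  simp [aeval_f] at hx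

lemma one_add_ne_zero_of_aeval_f : 1 + x ≠ 0 := by
  intro h
  rw [aeval_f, eq_neg_of_add_eq_zero_right h] at hx
  exact one_ne_zero (by linear_combination hx : (1 : K) = 0)

lemma aeval_rootShift_f : aeval (rootShift x) (f m) = 0 := by
  have h1 := one_add_ne_zero_of_aeval_f hx
  rw [aeval_f] at hx ⊢
  rw [rootShift]
  field_simp
  linear_combination -hx

lemma aeval_inv_f : aeval x⁻¹ (f (-m - 3)) = 0 := by
  have h0 := ne_zero_of_aeval_f hx
  rw [aeval_f] at hx ⊢
  push_cast
  field_simp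
  linear_combination -hx

lemma eq_or_eq_rootShift_or_eq_rootShift_rootShift {z : K} (hz : aeval z (f m) = 0) :
    z = x ∨ z = rootShift x ∨ z = rootShift (rootShift x) := by
  have h0 := ne_zero_of_aeval_f hx
  have h1 := one_add_ne_zero_of_aeval_f hx
  rw [rootShift_rootShift h0 h1, rootShift, eq_div_iff h1, eq_div_iff h0]
  rw [aeval_f] at hx hz
  have hprod : (z - x) * ((z * (1 + x) + 1) * (z * x + (1 + x))) = 0 := by
    linear_combination (x * (1 + x)) * hz - (z * (1 + z)) * hx
  rcases mul_eq_zero.mp hprod with h | h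
  · exact .inl (sub_eq_zero.mp h)
  rcases mul_eq_zero.mp h with h | h
  · exact .inr (.inl (eq_neg_of_add_eq_zero_left h))
  · exact .inr (.inr (eq_neg_of_add_eq_zero_left h))

lemma splits_f : ((f m).map (algebraMap ℚ K)).Splits := by
  have h0 := ne_zero_of_aeval_f hx
  have h1 := one_add_ne_zero_of_aeval_f hx
  have hfactor : (f m).map (algebraMap ℚ K) =
      (X - C x) * ((X - C (rootShift x)) * (X - C (rootShift (rootShift x)))) := by
    rw [aeval_f] at hx
    have e1 : x + rootShift x + rootShift (rootShift x) = m := by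
      rw [rootShift_rootShift h0 h1, rootShift]
      field_simp
      linear_combination hx
    have e2 : x * rootShift x + x * rootShift (rootShift x) +
        rootShift x * rootShift (rootShift x) = -(m + 3) := by
      rw [rootShift_rootShift h0 h1, rootShift]
      field_simp
      linear_combination -hx
    have e3 : x * rootShift x * rootShift (rootShift x) = 1 := by
      rw [rootShift_rootShift h0 h1, rootShift]
      field_simp
    replace e1 := congrArg C e1
    replace e2 := congrArg C e2
    replace e3 := congrArg C e3
    simp only [C_add, C_mul, C_neg, C_1] at e1 e2 e3
    rw [f]
    simp only [Polynomial.map_sub, Polynomial.map_mul, Polynomial.map_pow, map_X,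
      Polynomial.map_one, Polynomial.map_add, map_add, map_intCast, map_ofNat,
      Polynomial.map_intCast, Polynomial.map_ofNat] at e1 e2 ⊢
    linear_combination X ^ 2 * e1 - X * e2 + e3
  rw [hfactor]
  exact (Splits.X_sub_C _).mul ((Splits.X_sub_C _).mul (Splits.X_sub_C _))

lemma isIntegral_of_aeval_f : IsIntegral ℤ x := by
  refine ⟨X ^ 3 - C m * X ^ 2 - C (m + 3) * X - 1, by monicity!, ?_⟩
  rw [aeval_f] at hx
  simp only [eval₂_sub, eval₂_mul, eval₂_pow, eval₂_X, eval₂_C, eval₂_one]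
  simpa using hx

end Field

lemma aeval_intCast_f_ne_zero {K : Type*} [Field K] [Algebra ℚ K] {m : ℤ} (hm : 0 ≤ m) (k : ℤ) :
    aeval (k : K) (f m) ≠ 0 := by
  intro h
  have hk : k ^ 3 - m * k ^ 2 - (m + 3) * k - 1 = 0 := by
    have := algebraRat.charZero K
    rw [aeval_f] at h
    exact_mod_cast h
  have hunit : IsUnit k := .of_mul_eq_one (k ^ 2 - m * k - (m + 3)) (by linear_combination hk)
  rcases Int.isUnit_iff.mp hunit with rfl | rfl <;> linarith

lemma irreducible_f {m : ℤ} (hm : 0 ≤ m) : Irreducible (f m) := by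
  rw [irreducible_iff_roots_eq_zero_of_degree_le_three (by rw [natDegree_f]; norm_num)
    (natDegree_f m).le, Multiset.eq_zero_iff_forall_notMem]
  intro x hx
  have hx0 : aeval x (f m) = 0 := by simpa using (mem_roots'.mp hx).2
  obtain ⟨k, rfl⟩ := IsIntegrallyClosed.isIntegral_iff.mp (isIntegral_of_aeval_f hx0)
  exact aeval_intCast_f_ne_zero hm k hx0

lemma exists_real_root_f {m : ℤ} (hm : 0 ≤ m) :
    ∃ r : ℝ, m + 1 < r ∧ r < m + 2 ∧ aeval r (f m) = 0 := by
  have hm' : (0 : ℝ) ≤ m := mod_cast hm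
  have hcont : ContinuousOn (fun r : ℝ ↦ aeval r (f m)) (Set.Icc (m + 1) (m + 2)) :=
    (f m).continuous_aeval.continuousOn
  have h0 : (0 : ℝ) ∈ Set.Ioo (aeval ((m : ℝ) + 1) (f m)) (aeval ((m : ℝ) + 2) (f m)) := by
    rw [aeval_f, aeval_f]
    constructor <;> nlinarith
  obtain ⟨r, ⟨hr1, hr2⟩, hr⟩ := intermediate_value_Ioo (by linarith) hcont h0
  exact ⟨r, hr1, hr2, hr⟩

lemma exists_dominant_real_root_f {m n : ℤ} (hm : 0 ≤ m) (hn : n = m ∨ n = -m - 3) :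
    ∃ r : ℝ, aeval r (f n) = 0 ∧ m + 1 < |r| ∧ |r| < m + 3 ∧
      (m : ℝ) ^ 2 + 3 * m + 3 < r ^ 2 + r + 1 := by
  have hm' : (0 : ℝ) ≤ m := mod_cast hm
  obtain ⟨r, hr1, hr2, hr⟩ := exists_real_root_f hm
  rcases hn with rfl | rfl
  · refine ⟨r, hr, ?_, ?_, by nlinarith⟩ <;> rw [abs_of_pos] <;> linarith
  · refine ⟨-(1 + r), ?_, ?_, ?_, by nlinarith⟩
    · rw [aeval_f] at hr ⊢
      push_cast
      linear_combination -hr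
    all_goals rw [abs_neg, abs_of_pos] <;> linarith

end Polynomial

section RealRoots

/-- The Eisenstein integer of norm `m ^ 2 + 3 * m + 9` whose class modulo cubes determines `L m`:
for every root `x` of `f m`, the product `(x - ω) ^ 3 * τ m` is real. -/
noncomputable def τ (m : ℤ) : ℂ := m + 3 + 3 * ω

lemma τ_mem_eisensteinIntegers (m : ℤ) : τ m ∈ eisensteinIntegers :=
  ⟨m + 3, 3, by rw [τ]; push_cast; ring⟩

lemma conj_τ (m : ℤ) : conj (τ m) = m - 3 * ω := by
  rw [τ, map_add, map_add, map_mul, map_intCast, conj_ω, map_ofNat]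
  ring

lemma conj_τ_eq_add (m : ℤ) : conj (τ m) = τ m + θ ^ 3 := by
  rw [conj_τ, τ, pow_succ, θ_sq, θ]
  ring

lemma norm_τ_sq (m : ℤ) : ‖τ m‖ ^ 2 = m ^ 2 + 3 * m + 9 := by
  have h := normSq_add_mul_ω (m + 3) 3
  push_cast at h
  rw [← Complex.normSq_eq_norm_sq, τ, h]
  ring

lemma norm_τ_neg_sub_three (m : ℤ) : ‖τ (-m - 3)‖ = ‖τ m‖ := by
  rw [← sq_eq_sq₀ (norm_nonneg _) (norm_nonneg _), norm_τ_sq, norm_τ_sq]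
  push_cast
  ring

lemma add_one_le_norm_τ {m : ℤ} (hm : 0 ≤ m) : m + 1 ≤ ‖τ m‖ := by
  have hm' : (0 : ℝ) ≤ m := mod_cast hm
  exact le_of_sq_le_sq (by linarith [norm_τ_sq m]) (norm_nonneg _)

lemma norm_τ_le_add_three {m : ℤ} (hm : 0 ≤ m) : ‖τ m‖ ≤ m + 3 := by
  have hm' : (0 : ℝ) ≤ m := mod_cast hm
  exact le_of_sq_le_sq (by linarith [norm_τ_sq m]) (by linarith)

lemma τ_ne_zero (m : ℤ) : τ m ≠ 0 := by
  intro h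
  have hsq := norm_τ_sq m
  rw [h, norm_zero] at hsq
  nlinarith [sq_nonneg ((m : ℝ) + 3)]

lemma normSq_sub_ω (a : ℝ) : Complex.normSq (a - ω) = a ^ 2 + a + 1 := by
  have h := normSq_add_mul_ω a (-1)
  rw [sub_eq_add_neg, ← neg_one_mul ω]
  push_cast at h
  rw [h]
  ring

lemma sub_ω_ne_zero (a : ℝ) : (a : ℂ) - ω ≠ 0 := by
  rw [← Complex.normSq_pos, normSq_sub_ω]
  nlinarith [sq_nonneg (a + 1)]

lemma sub_ω_pow_three {m : ℤ} {a : ℝ} (ha : aeval a (f m) = 0) :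
    ((a : ℂ) - ω) ^ 3 = (a * (a + 1) : ℝ) * conj (τ m) := by
  rw [aeval_f] at ha
  have ha' : (a : ℂ) ^ 3 - m * a ^ 2 - (m + 3) * a - 1 = 0 := mod_cast congrArg Complex.ofReal ha
  rw [conj_τ]
  push_cast
  linear_combination ha' + (3 * a + 1 - ω) * ω_sq

lemma pow_three_cpow_of_lt_re {u : ℂ} (hu : ‖u‖ < 2 * u.re) : (u ^ 3) ^ (1 / 3 : ℂ) = u := by
  have hu0 : 0 < ‖u‖ := by
    have := Complex.re_le_norm u
    linarith [norm_nonneg u]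
  have harg : |u.arg| < Real.pi / 3 := by
    by_contra! h
    have hcos := Real.cos_le_cos_of_nonneg_of_le_pi (by positivity) (Complex.abs_arg_le_pi u) h
    rw [Real.cos_abs, Complex.cos_arg (norm_pos_iff.mp hu0), Real.cos_pi_div_three,
      div_le_iff₀ hu0] at hcos
    linarith
  rw [abs_lt] at harg
  have h := Complex.pow_cpow_nat_inv (x := u) three_ne_zero (by simpa using harg.1)
    (by simpa using harg.2.le)
  simpa using h

lemma cpow_one_add_θ_pow_three_div_τ {m : ℤ} {a : ℝ} (ha : aeval a (f m) = 0) (ha1 : 1 < a) :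
    (1 + θ ^ 3 / τ m) ^ (1 / 3 : ℂ) = (a - ω) / conj (a - ω) := by
  have h0 := sub_ω_ne_zero a
  have : conj ((a : ℂ) - ω) ≠ 0 := (_root_.map_ne_zero _).mpr h0
  have hcube : 1 + θ ^ 3 / τ m = ((a - ω) / conj (a - ω)) ^ 3 := by
    have haa : ((a * (a + 1) : ℝ) : ℂ) ≠ 0 := by
      rw [Complex.ofReal_ne_zero]
      positivity
    rw [div_pow, ← map_pow, sub_ω_pow_three ha, map_mul, Complex.conj_ofReal, Complex.conj_conj,
      mul_div_mul_left _ _ haa, conj_τ_eq_add, add_div, div_self (τ_ne_zero m)]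
  rw [hcube]
  apply pow_three_cpow_of_lt_re
  rw [norm_div, Complex.norm_conj, div_self (norm_ne_zero_iff.mpr h0), Complex.div_re,
    Complex.normSq_conj, normSq_sub_ω]
  have h3 : √3 * √3 = 3 := Real.mul_self_sqrt (by norm_num)
  simp only [ω, Complex.conj_re, Complex.conj_im, Complex.sub_re, Complex.sub_im,
    Complex.ofReal_re, Complex.ofReal_im]
  rw [← add_div, ← mul_div_assoc, lt_div_iff₀ (by nlinarith)]
  nlinarith

end RealRoots

section ResolventBound

lemma pow_three_dvd_add_pow_five_mul {R : Type*} [CommRing R] {d u v w : R} (hu : d ∣ u)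
    (hv : d ^ 3 ∣ v ^ 3 * w) : d ^ 3 ∣ (u + v) ^ 5 * w := by
  have h : (u + v) ^ 5 * w = u ^ 3 * ((u ^ 2 + 5 * u * v + 10 * v ^ 2) * w) +
      v ^ 3 * w * (10 * u ^ 2 + 5 * u * v + v ^ 2) := by ring
  rw [h]
  exact dvd_add (dvd_mul_of_dvd_left (pow_dvd_pow_of_dvd hu 3) _) (dvd_mul_of_dvd_left hv _)

lemma norm_le_norm_of_dvd {z w : eisensteinIntegers} (h : z ∣ w) (hw : w ≠ 0) :
    ‖(z : ℂ)‖ ≤ ‖(w : ℂ)‖ := by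
  obtain ⟨v, rfl⟩ := h
  have hv : (v : ℂ) ≠ 0 := by simpa using right_ne_zero_of_mul hw
  rw [Subring.coe_mul, norm_mul]
  exact le_mul_of_one_le_right (norm_nonneg _) (one_le_norm_of_mem_eisensteinIntegers v.2 hv)

lemma exists_mul_sub_conj_eq_θ {X Y : ℤ} (h : IsCoprime X Y) :
    ∃ e ∈ eisensteinIntegers, (X + Y * ω) * e - conj ((X + Y * ω) * e) = θ := by
  obtain ⟨p, q, hpq⟩ := h
  refine ⟨q + p + p * ω, ⟨q + p, p, by push_cast; ring⟩, ?_⟩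
  have hpq' : (p : ℂ) * X + q * Y = 1 := mod_cast hpq
  simp only [map_mul, map_add, map_intCast, conj_ω, θ]
  linear_combination (2 * ω + 1) * hpq'

lemma norm_pow_three_le_of_isCoprime {X Y : ℤ} (hXY : IsCoprime X Y) {U : ℂ}
    (hU : U ∈ eisensteinIntegers) (hU0 : U ≠ 0)
    (hreal : conj ((X + Y * ω) ^ 3 * U) = (X + Y * ω) ^ 3 * U) :
    ‖(X + Y * ω : ℂ)‖ ^ 3 ≤ √3 ^ 5 * ‖U‖ := by
  obtain ⟨e, he, hθ⟩ := exists_mul_sub_conj_eq_θ hXY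
  set D : ℂ := X + Y * ω
  have hD : D ∈ eisensteinIntegers := ⟨X, Y, rfl⟩
  let d : eisensteinIntegers := ⟨D, hD⟩
  let u : eisensteinIntegers := d * ⟨e, he⟩
  let v : eisensteinIntegers := -⟨conj (D * e), conj_mem_eisensteinIntegers (mul_mem hD he)⟩
  let w : eisensteinIntegers := ⟨conj U, conj_mem_eisensteinIntegers hU⟩
  have huv : ((u + v : eisensteinIntegers) : ℂ) = θ := by
    rw [← hθ, sub_eq_add_neg]
    rfl
  have hdvd : d ^ 3 ∣ v ^ 3 * w := by
    refine ⟨-⟨conj e, conj_mem_eisensteinIntegers he⟩ ^ 3 * ⟨U, hU⟩, Subtype.ext ?_⟩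
    simp only [map_mul, map_pow] at hreal
    simp only [v, w, d, Subring.coe_mul, Subring.coe_pow, Subring.coe_neg, map_mul]
    linear_combination -(conj e) ^ 3 * hreal
  have hval : (((u + v) ^ 5 * w : eisensteinIntegers) : ℂ) = θ ^ 5 * conj U := by
    rw [Subring.coe_mul, Subring.coe_pow, huv]
  have h := norm_le_norm_of_dvd (w := (u + v) ^ 5 * w)
    (pow_three_dvd_add_pow_five_mul ⟨_, rfl⟩ hdvd) (by
      rw [Ne, ← Subring.coe_eq_zero_iff, hval, mul_eq_zero, not_or]
      exact ⟨pow_ne_zero 5 θ_ne_zero, (_root_.map_ne_zero _).mpr hU0⟩)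
  rwa [hval, Subring.coe_pow, norm_pow, norm_mul, norm_pow, norm_θ, Complex.norm_conj] at h

variable {m n T : ℤ} {a c : ℝ}

lemma exists_add_mul_ω_eq (ha : aeval a (f m) = 0) (hc : aeval c (f n) = 0)
    (hT : T = a * c + rootShift a * rootShift c +
      rootShift (rootShift a) * rootShift (rootShift c)) :
    ∃ κ : ℝ, ((T + 3 + m : ℤ) : ℂ) + (m - n : ℤ) * ω = κ * ((a - ω) * conj (c - ω)) := by
  have a0 := ne_zero_of_aeval_f ha
  have a1 := one_add_ne_zero_of_aeval_f ha
  have c0 := ne_zero_of_aeval_f hc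
  have c1 := one_add_ne_zero_of_aeval_f hc
  rw [aeval_f] at ha hc
  have hm : (m : ℝ) = (a ^ 3 - 3 * a - 1) / (a * (1 + a)) := by
    rw [eq_div_iff (mul_ne_zero a0 a1)]
    linear_combination -ha
  have hn : (n : ℝ) = (c ^ 3 - 3 * c - 1) / (c * (1 + c)) := by
    rw [eq_div_iff (mul_ne_zero c0 c1)]
    linear_combination -hc
  rw [rootShift_rootShift a0 a1, rootShift_rootShift c0 c1, rootShift, rootShift] at hT
  let κ : ℝ := 1 + 1 / ((1 + a) * (1 + c)) + 1 / (a * c)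
  have hX : ((T + 3 + m : ℤ) : ℝ) = κ * (a * c + 1 + a) := by
    push_cast
    rw [hT, hm]
    simp only [κ]
    field_simp
    ring
  have hY : ((m - n : ℤ) : ℝ) = κ * (a - c) := by
    push_cast
    rw [hn, hm]
    simp only [κ]
    field_simp
    ring
  refine ⟨κ, ?_⟩
  rw [← Complex.ofReal_intCast, ← Complex.ofReal_intCast (m - n), hX, hY, map_sub, conj_ω,
    Complex.conj_ofReal]
  push_cast
  linear_combination κ * ω_sq

lemma exists_isCoprime_add_mul_ω_eq (ha : aeval a (f m) = 0) (hc : aeval c (f n) = 0)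
    (hT : T = a * c + rootShift a * rootShift c +
      rootShift (rootShift a) * rootShift (rootShift c)) (hmn : m ≠ n) :
    ∃ X Y : ℤ, IsCoprime X Y ∧ ∃ κ : ℝ, (X + Y * ω : ℂ) = κ * ((a - ω) * conj (c - ω)) := by
  obtain ⟨κ, hκ⟩ := exists_add_mul_ω_eq ha hc hT
  have hg := Int.gcd_pos_of_ne_zero_right (T + 3 + m) (sub_ne_zero.mpr hmn)
  obtain ⟨X, Y, hXY, hX, hY⟩ := Int.exists_gcd_one hg
  set g := Int.gcd (T + 3 + m) (m - n)
  refine ⟨X, Y, Int.isCoprime_iff_gcd_eq_one.mpr hXY, κ / g, ?_⟩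
  have hg0 : (g : ℂ) ≠ 0 := mod_cast hg.ne'
  rw [hX, hY] at hκ
  push_cast at hκ ⊢
  rw [div_mul_eq_mul_div, ← hκ]
  field_simp

lemma norm_add_mul_ω_pow_three_le (ha : aeval a (f m) = 0) (hc : aeval c (f n) = 0) {X Y : ℤ}
    (hXY : IsCoprime X Y) {κ : ℝ} (hκ : (X + Y * ω : ℂ) = κ * ((a - ω) * conj (c - ω))) :
    ‖(X + Y * ω : ℂ)‖ ^ 3 ≤ 16 * ‖τ m‖ * ‖τ n‖ := by
  have hreal : (X + Y * ω : ℂ) ^ 3 * (τ m * conj (τ n)) =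
      (κ ^ 3 * (a * (a + 1)) * (c * (c + 1)) * ‖τ m‖ ^ 2 * ‖τ n‖ ^ 2 : ℝ) := by
    have hc3 := congrArg conj (sub_ω_pow_three hc)
    rw [map_mul, Complex.conj_conj, Complex.conj_ofReal, map_pow] at hc3
    rw [hκ, mul_pow, mul_pow, sub_ω_pow_three ha, hc3]
    push_cast
    rw [← Complex.mul_conj', ← Complex.mul_conj']
    ring
  have h := norm_pow_three_le_of_isCoprime hXY
    (mul_mem (τ_mem_eisensteinIntegers m)
      (conj_mem_eisensteinIntegers (τ_mem_eisensteinIntegers n)))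
    (mul_ne_zero (τ_ne_zero m) ((_root_.map_ne_zero _).mpr (τ_ne_zero n)))
    (by rw [hreal, Complex.conj_ofReal])
  have h35 : √3 ^ 5 ≤ 16 := by
    refine abs_le_of_sq_le_sq' ?_ (by norm_num) |>.2
    rw [← pow_mul, pow_mul' _ 5 2, Real.sq_sqrt (by norm_num)]
    norm_num
  calc _ ≤ √3 ^ 5 * ‖τ m * conj (τ n)‖ := h
    _ ≤ 16 * ‖τ m * conj (τ n)‖ := by gcongr
    _ = 16 * ‖τ m‖ * ‖τ n‖ := by rw [norm_mul, Complex.norm_conj, mul_assoc]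

lemma norm_div_conj_mul_conj_sub_le (hcn : 3 * ‖τ n‖ ^ 2 ≤ 4 * (c ^ 2 + c + 1)) {D : ℂ} {κ : ℝ}
    (hκ : D = κ * ((a - ω) * conj (c - ω))) :
    ‖(a - ω) / conj (a - ω) * conj D - D‖ ≤ 2 * ‖D‖ / ‖τ n‖ := by
  have ha0 : conj ((a : ℂ) - ω) ≠ 0 := (_root_.map_ne_zero _).mpr (sub_ω_ne_zero a)
  have hdiff : (a - ω) / conj (a - ω) * conj D - D = -θ * (κ * (a - ω)) := by
    have hc : conj (c - ω) = c - ω + θ := by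
      rw [map_sub, Complex.conj_ofReal, conj_ω, θ]
      ring
    have hD : conj D = conj (a - ω) * (κ * (c - ω)) := by
      rw [hκ, map_mul, map_mul, Complex.conj_conj, Complex.conj_ofReal]
      ring
    rw [hD, ← mul_assoc, div_mul_cancel₀ _ ha0, hκ, hc]
    ring
  have hcτ : √3 * ‖τ n‖ ≤ 2 * ‖(c : ℂ) - ω‖ := by
    refine (sq_le_sq₀ (by positivity) (by positivity)).mp ?_
    rw [mul_pow, mul_pow, Real.sq_sqrt (by norm_num), ← Complex.normSq_eq_norm_sq (c - ω),
      normSq_sub_ω]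
    linarith
  have hDn : ‖D‖ = ‖κ * ((a : ℂ) - ω)‖ * ‖(c : ℂ) - ω‖ := by
    rw [hκ, ← mul_assoc, norm_mul, Complex.norm_conj]
  rw [hdiff, norm_mul, norm_neg, norm_θ, hDn, le_div_iff₀ (norm_pos_iff.mpr (τ_ne_zero n))]
  calc _ = ‖κ * ((a : ℂ) - ω)‖ * (√3 * ‖τ n‖) := by ring
    _ ≤ ‖κ * ((a : ℂ) - ω)‖ * (2 * ‖(c : ℂ) - ω‖) := by gcongr
    _ = _ := by ring

lemma norm_τ_le_pow (ha : aeval a (f m) = 0) (hc : aeval c (f n) = 0)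
    (hT : T = a * c + rootShift a * rootShift c +
      rootShift (rootShift a) * rootShift (rootShift c)) (hmn : m ≠ n) (ha1 : 1 < a)
    (hm : 27 * 1138 ≤ ‖τ m‖) (hcn : 3 * ‖τ n‖ ^ 2 ≤ 4 * (c ^ 2 + c + 1)) :
    ‖τ n‖ ≤ (‖τ m‖ / 27) ^ 54 := by
  by_contra! hlt
  obtain ⟨X, Y, hXY, κ, hκ⟩ := exists_isCoprime_add_mul_ω_eq ha hc hT hmn
  have hcube := norm_add_mul_ω_pow_three_le ha hc hXY hκ
  have hD0 : (X + Y * ω : ℂ) ≠ 0 := by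
    intro h0
    obtain ⟨e, -, he⟩ := exists_mul_sub_conj_eq_θ hXY
    rw [h0, zero_mul, map_zero, sub_zero] at he
    exact θ_ne_zero he.symm
  set D : ℂ := X + Y * ω
  have hD : D ∈ eisensteinIntegers := ⟨X, Y, rfl⟩
  have hlower := two_mul_norm_div_lt_norm_cpow_mul_sub (E := conj D) (τ_mem_eisensteinIntegers m) hD
    (conj_mem_eisensteinIntegers hD) ((_root_.map_ne_zero _).mpr hD0) hm
    (by rwa [Complex.norm_conj]) hlt
  rw [cpow_one_add_θ_pow_three_div_τ ha ha1, Complex.norm_conj] at hlower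
  exact hlower.not_ge (norm_div_conj_mul_conj_sub_le hcn hκ)

end ResolventBound

section Gap

variable {r c : ℝ} {k : ℕ}

lemma one_add_pow_le_of_sq_mul_le_one {x : ℝ} (hx : 0 ≤ x) (hk : k ^ 2 * x ≤ 1) :
    (1 + x) ^ k ≤ 1 + (k + 1) * x := by
  have hkx : k * x ≤ 1 := by
    refine le_trans ?_ hk
    gcongr
    exact_mod_cast Nat.le_self_pow two_ne_zero k
  have hexp := Real.abs_exp_sub_one_sub_id_le (x := k * x) (by rwa [abs_of_nonneg (by positivity)])
  calc (1 + x) ^ k ≤ Real.exp x ^ k := by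
        gcongr
        linarith [Real.add_one_le_exp x]
    _ = Real.exp (k * x) := (Real.exp_nat_mul x k).symm
    _ ≤ 1 + k * x + (k * x) ^ 2 := by linarith [(abs_le.mp hexp).2]
    _ = 1 + k * x + k ^ 2 * x * x := by ring
    _ ≤ 1 + k * x + 1 * x := by gcongr
    _ = 1 + (k + 1) * x := by ring

lemma exists_pow_sq_le_mul_sq (hr : 1 < r) {C : ℝ} (hC : r ≤ C) {K : ℕ} (hCK : C < r ^ K) :
    ∃ k, k ≠ 0 ∧ k ≤ K ∧ (r ^ k) ^ 2 ≤ r * C ^ 2 ∧ C ^ 2 ≤ r * (r ^ k) ^ 2 := by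
  have hrC : r ^ 2 * r ≤ r * C ^ 2 := by
    rw [mul_comm]
    gcongr
  obtain ⟨k, hk, hk'⟩ := exists_nat_pow_near (x := r * C ^ 2) (y := r ^ 2) (by nlinarith)
    (one_lt_pow₀ hr two_ne_zero)
  refine ⟨k, ?_, ?_, by rwa [pow_right_comm], ?_⟩
  · rintro rfl
    rw [zero_add, pow_one] at hk'
    exact (hrC.trans_lt hk').not_ge (le_mul_of_one_le_right (sq_nonneg r) hr.le)
  · have hlt : r ^ (2 * k) < r ^ (2 * K + 1) :=
      calc r ^ (2 * k) ≤ r * C ^ 2 := by rwa [pow_mul]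
        _ < r * (r ^ K) ^ 2 := by gcongr; linarith
        _ = r ^ (2 * K + 1) := by ring
    have := (pow_lt_pow_iff_right₀ hr).mp hlt
    lia
  · refine le_of_mul_le_mul_left (hk'.le.trans_eq ?_) (by linarith : 0 < r)
    ring

lemma rootShift_rootShift_mul_inv_pow_sub (hr : 0 < r) (hc : c ≠ 0) (hc1 : 1 + c ≠ 0) :
    rootShift (rootShift c) * (rootShift (rootShift r))⁻¹ ^ k - (-1) ^ (k + 1) =
      (-1) ^ (k + 1) * ((1 + 1 / c) - (1 + 1 / r) ^ k) / (1 + 1 / r) ^ k := by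
  have hrr : (-(1 + r) / r)⁻¹ = -1 / (1 + 1 / r) := by
    field_simp
    ring
  rw [rootShift_rootShift hr.ne' (by positivity), rootShift_rootShift hc hc1, hrr, div_pow]
  field_simp
  ring

lemma abs_rootShift_rootShift_mul_inv_pow_sub_le (hr : 1 < r) (hc : r < |c|) (hk0 : k ≠ 0)
    (hk : k ^ 2 ≤ r) :
    rootShift (rootShift c) * (rootShift (rootShift r))⁻¹ ^ k - (-1) ^ (k + 1) ≠ 0 ∧
      |rootShift (rootShift c) * (rootShift (rootShift r))⁻¹ ^ k - (-1) ^ (k + 1)| ≤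
        (k + 2) / r := by
  have hr0 : 0 < r := by linarith
  have hc0 : c ≠ 0 := abs_pos.mp (hr0.trans hc)
  have hc1 : 1 + c ≠ 0 := by
    intro h
    rw [eq_neg_of_add_eq_zero_right h, abs_neg, abs_one] at hc
    exact hr.not_gt hc
  have hcr : |1 / c| < 1 / r := by
    rw [abs_div, abs_one]
    exact one_div_lt_one_div_of_lt hr0 hc
  obtain ⟨hcr1, hcr2⟩ := abs_lt.mp hcr
  have hx : 0 < 1 / r := by positivity
  have hpow1 : 1 + 1 / r ≤ (1 + 1 / r) ^ k := le_self_pow₀ (by linarith) hk0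
  have hpow2 : (1 + 1 / r) ^ k ≤ 1 + (k + 1) * (1 / r) :=
    one_add_pow_le_of_sq_mul_le_one hx.le (by rwa [mul_one_div, div_le_one hr0])
  rw [rootShift_rootShift_mul_inv_pow_sub hr0 hc0 hc1]
  constructor
  · exact div_ne_zero (mul_ne_zero (by simp) (by linarith)) (by positivity)
  · rw [abs_div, abs_mul, abs_neg_one_pow, one_mul,
      abs_of_pos (by positivity : 0 < (1 + 1 / r) ^ k)]
    refine div_le_of_le_mul₀ (by positivity) (by positivity) ?_
    have hle : |(1 + 1 / c) - (1 + 1 / r) ^ k| ≤ (k + 2) / r := by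
      rw [add_div, add_mul, mul_one_div] at *
      rw [abs_le, show (2 : ℝ) / r = 1 / r + 1 / r by ring]
      constructor <;> linarith
    exact hle.trans (le_mul_of_one_le_right (by positivity) (by linarith))

lemma abs_mul_inv_pow_sub_le {u : ℝ} (hr : 0 < r) (hu : |u| = 1) :
    |c * r⁻¹ ^ k - u| ≤ |c| / r ^ k + 1 := by
  refine (abs_sub _ _).trans_eq ?_
  rw [hu, inv_pow, ← div_eq_mul_inv, abs_div, abs_of_pos (pow_pos hr k)]

lemma abs_rootShift_mul_inv_pow_sub_le {u : ℝ} (hr : 12 ≤ r) (hu : |u| = 1) (hc : r < |c|)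
    (hk : 12 * (k + 1) ≤ r) (hk2 : k ^ 2 ≤ r) :
    |rootShift c * (rootShift r)⁻¹ ^ k - u| ≤ 5 / 4 * (r ^ k / |c|) + 1 := by
  have hr0 : 0 < r := by linarith
  have hc1 : |c| * (11 / 12) ≤ |1 + c| := by
    have := abs_sub_abs_le_abs_sub c (-1)
    rw [abs_neg, abs_one, sub_neg_eq_add, add_comm c] at this
    linarith
  have hpow : (1 + r) ^ k ≤ 13 / 12 * r ^ k := by
    have h := one_add_pow_le_of_sq_mul_le_one (by positivity : 0 ≤ 1 / r)
      (by rwa [mul_one_div, div_le_one hr0])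
    rw [mul_one_div] at h
    have h' : (k + 1) / r ≤ 1 / 12 := by
      rw [div_le_div_iff₀ hr0 (by norm_num)]
      linarith
    calc (1 + r) ^ k = (1 + 1 / r) ^ k * r ^ k := by
          rw [← mul_pow, add_mul, one_div_mul_cancel hr0.ne']
          ring
      _ ≤ 13 / 12 * r ^ k := by
          gcongr
          linarith
  refine (abs_sub _ _).trans ?_
  rw [hu, rootShift, rootShift, inv_div, div_neg, div_one, abs_mul, abs_div, abs_neg, abs_one,
    abs_pow, abs_neg, abs_of_pos (by linarith : 0 < 1 + r), one_div_mul_eq_div]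
  gcongr
  calc (1 + r) ^ k / |1 + c| ≤ 13 / 12 * r ^ k / (|c| * (11 / 12)) := by
        gcongr
        linarith
    _ = 13 / 11 * (r ^ k / |c|) := by
        field_simp
    _ ≤ 5 / 4 * (r ^ k / |c|) := by
        exact mul_le_mul_of_nonneg_right (by norm_num) (by positivity)

lemma add_one_mul_add_one_mul_div_sq_lt_one {x s y : ℝ} (hy : 0 ≤ y) (hs : 3 * (y + 2) ≤ s)
    (hx0 : x ≠ 0) (hx : x ≤ s) (hx' : x⁻¹ ≤ s) :
    (x + 1) * (5 / 4 * x⁻¹ + 1) * ((y + 2) / s ^ 2) < 1 := by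
  have hs0 : 0 < s := by linarith
  calc (x + 1) * (5 / 4 * x⁻¹ + 1) * ((y + 2) / s ^ 2)
      = (9 / 4 + x + 5 / 4 * x⁻¹) * ((y + 2) / s ^ 2) := by
        field_simp
        ring
    _ ≤ (9 / 4 + s + 5 / 4 * s) * ((s / 3) / s ^ 2) := by
        gcongr
        linarith
    _ = 3 / 4 * (1 / s + 1) := by
        field_simp
        ring
    _ ≤ 3 / 4 * (1 / 6 + 1) := by
        gcongr
        linarith
    _ < 1 := by norm_num

lemma exists_abs_mul_mul_lt_one {K : ℕ} (hr : (3 * (K + 2)) ^ 2 ≤ r) (hc : r < |c|)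
    (hcK : |c| < r ^ K) :
    ∃ (k : ℕ) (u : ℤ), |(c * r⁻¹ ^ k - u) * (rootShift c * (rootShift r)⁻¹ ^ k - u) *
        (rootShift (rootShift c) * (rootShift (rootShift r))⁻¹ ^ k - u)| < 1 ∧
      rootShift (rootShift c) * (rootShift (rootShift r))⁻¹ ^ k - u ≠ 0 := by
  have : (0 : ℝ) ≤ K := K.cast_nonneg
  have hr36 : 36 ≤ r := by nlinarith
  have hr0 : 0 < r := by linarith
  have hc0 : 0 < |c| := by linarith
  obtain ⟨k, hk0, hkK, hk1, hk2⟩ := exists_pow_sq_le_mul_sq (by linarith) hc.le hcK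
  have hkK' : (k : ℝ) ≤ K := mod_cast hkK
  have hk : (0 : ℝ) ≤ k := k.cast_nonneg
  obtain ⟨hne, hw2⟩ := abs_rootShift_rootShift_mul_inv_pow_sub_le (by linarith) hc hk0
    (by nlinarith)
  have hw0 := abs_mul_inv_pow_sub_le (c := c) (k := k) hr0 (abs_neg_one_pow (k + 1))
  have hw1 := abs_rootShift_mul_inv_pow_sub_le (k := k) (by linarith) (abs_neg_one_pow (k + 1)) hc
    (by nlinarith) (by nlinarith)
  refine ⟨k, (-1) ^ (k + 1), ?_, by exact_mod_cast hne⟩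
  push_cast
  have hs : 3 * (k + 2) ≤ √r := (by gcongr : _ ≤ 3 * ((K : ℝ) + 2)).trans (Real.le_sqrt_of_sq_le hr)
  have hss : √r ^ 2 = r := Real.sq_sqrt hr0.le
  have hx : |c| / r ^ k ≤ √r := by
    rw [div_le_iff₀ (by positivity)]
    exact (sq_le_sq₀ hc0.le (by positivity)).mp (by rwa [mul_pow, hss])
  have hx' : (|c| / r ^ k)⁻¹ ≤ √r := by
    rw [inv_div, div_le_iff₀ hc0]
    exact (sq_le_sq₀ (by positivity) (by positivity)).mp (by rwa [mul_pow, hss])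
  have hlt := add_one_mul_add_one_mul_div_sq_lt_one hk hs (by positivity) hx hx'
  rw [inv_div, hss] at hlt
  rw [abs_mul, abs_mul]
  exact (by gcongr : _ ≤ _).trans_lt hlt

end Gap

section CyclicCubic

variable {K : Type*} [Field K] [Algebra ℚ K] [FiniteDimensional ℚ K] [IsGalois ℚ K]
  {σ : Gal(K/ℚ)}

lemma apply_apply_apply_of_finrank_eq_three (hK : Module.finrank ℚ K = 3) (σ : Gal(K/ℚ)) (z : K) :
    σ (σ (σ z)) = z := by
  have hcard : Nat.card Gal(K/ℚ) = 3 := by rw [IsGalois.card_aut_eq_finrank, hK]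
  have hσ3 : σ ^ 3 = 1 := hcard ▸ pow_card_eq_one'
  exact DFunLike.congr_fun hσ3 z

lemma exists_intCast_eq_of_isIntegral (hK : (Module.finrank ℚ K).Prime) (hσ : σ ≠ 1) {z : K}
    (hz : IsIntegral ℤ z) (hσz : σ z = z) : ∃ k : ℤ, (k : K) = z := by
  have hp : Fact (Module.finrank ℚ K).Prime := ⟨hK⟩
  have hbot : z ∈ (⊥ : IntermediateField ℚ K) := by
    rw [IsGalois.mem_bot_iff_fixed]
    intro g
    have hg : g ∈ Subgroup.zpowers σ :=
      mem_zpowers_of_prime_card (IsGalois.card_aut_eq_finrank ℚ K) hσ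
    have hle : Subgroup.zpowers σ ≤ MulAction.stabilizer Gal(K/ℚ) z :=
      (Subgroup.zpowers_le).mpr hσz
    exact hle hg
  obtain ⟨q, rfl⟩ := IntermediateField.mem_bot.mp hbot
  have hq : IsIntegral ℤ q := (isIntegral_algebraMap_iff (algebraMap ℚ K).injective).mp hz
  obtain ⟨k, rfl⟩ := IsIntegrallyClosed.isIntegral_iff.mp hq
  exact ⟨k, by simp⟩

lemma exists_intCast_eq_add_add (hK : Module.finrank ℚ K = 3) (hσ : σ ≠ 1) {z : K}
    (hz : IsIntegral ℤ z) : ∃ k : ℤ, (k : K) = z + σ z + σ (σ z) := by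
  refine exists_intCast_eq_of_isIntegral (hK ▸ Nat.prime_three) hσ
    ((hz.add (hz.map σ)).add ((hz.map σ).map σ)) ?_
  rw [map_add, map_add, apply_apply_apply_of_finrank_eq_three hK]
  ring

lemma exists_intCast_eq_mul_mul (hK : Module.finrank ℚ K = 3) (hσ : σ ≠ 1) {z : K}
    (hz : IsIntegral ℤ z) : ∃ k : ℤ, (k : K) = z * σ z * σ (σ z) := by
  refine exists_intCast_eq_of_isIntegral (hK ▸ Nat.prime_three) hσ
    ((hz.mul (hz.map σ)).mul ((hz.map σ).map σ)) ?_
  rw [map_mul, map_mul, apply_apply_apply_of_finrank_eq_three hK]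
  ring

lemma eq_zero_of_abs_mul_mul_lt_one (hK : Module.finrank ℚ K = 3) (hσ : σ ≠ 1) (ι : K →ₐ[ℚ] ℝ)
    {z : K} (hz : IsIntegral ℤ z) (h : |ι z * ι (σ z) * ι (σ (σ z))| < 1) : z = 0 := by
  obtain ⟨k, hk⟩ := exists_intCast_eq_mul_mul hK hσ hz
  rw [← map_mul, ← map_mul, ← hk, map_intCast, ← Int.cast_abs] at h
  have hk0 : k = 0 := Int.abs_lt_one_iff.mp (mod_cast h)
  rw [hk0, Int.cast_zero, eq_comm, mul_eq_zero, mul_eq_zero] at hk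
  simpa using hk

end CyclicCubic

section RootPairs

variable {K : Type*} [Field K] [Algebra ℚ K] {σ : Gal(K/ℚ)} {m n : ℤ} {a c : K}

lemma exists_root_f_map_eq (ι : K →ₐ[ℚ] ℝ) (ha : aeval a (f m) = 0) (hσ : σ a = rootShift a)
    {r : ℝ} (hr : aeval r (f m) = 0) :
    ∃ b : K, aeval b (f m) = 0 ∧ σ b = rootShift b ∧ ι b = r := by
  have hιa : aeval (ι a) (f m) = 0 := by rw [aeval_algHom_apply, ha, map_zero]
  have ha' := aeval_rootShift_f ha
  rcases eq_or_eq_rootShift_or_eq_rootShift_rootShift hιa hr with rfl | rfl | rfl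
  · exact ⟨a, ha, hσ, rfl⟩
  · exact ⟨rootShift a, ha', by rw [map_rootShift, hσ], map_rootShift ι a⟩
  · exact ⟨rootShift (rootShift a), aeval_rootShift_f ha', by simp only [map_rootShift, hσ],
      by simp only [map_rootShift]⟩

lemma exists_root_f_map_eq_rootShift [IsGalois ℚ K] (hm : 0 ≤ m) (ha : aeval a (f m) = 0) :
    ∃ σ : Gal(K/ℚ), σ a = rootShift a := by
  have hmin : f m = minpoly ℚ a :=
    minpoly.eq_of_irreducible_of_monic (irreducible_f hm) ha (monic_f m)
  exact minpoly.exists_algEquiv_of_root' (Algebra.IsAlgebraic.isAlgebraic a)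
    (hmin ▸ aeval_rootShift_f ha)

lemma ne_one_of_map_eq_rootShift (ι : K →ₐ[ℚ] ℝ) (ha : aeval a (f m) = 0)
    (hσ : σ a = rootShift a) : σ ≠ 1 := by
  rintro rfl
  have ha1 : 1 + a ≠ 0 := one_add_ne_zero_of_aeval_f ha
  have hquad : a ^ 2 + a + 1 = 0 := by
    rw [AlgEquiv.one_apply, rootShift, eq_div_iff ha1] at hσ
    linear_combination hσ
  have hι : ι a ^ 2 + ι a + 1 = 0 := by
    simpa only [map_add, map_pow, map_one, map_zero] using congrArg ι hquad
  nlinarith [sq_nonneg (2 * ι a + 1)]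

variable [FiniteDimensional ℚ K] [IsGalois ℚ K]

lemma exists_root_f_or_neg_sub_three_map_eq_rootShift (hK : Module.finrank ℚ K = 3) (hσ : σ ≠ 1)
    (hm : 0 ≤ m) (ha : aeval a (f m) = 0) :
    ∃ (n : ℤ) (b : K), (n = m ∨ n = -m - 3) ∧ aeval b (f n) = 0 ∧ σ b = rootShift b := by
  have hσa : aeval (σ a) (f m) = 0 := by
    rw [← AlgEquiv.coe_toAlgHom, aeval_algHom_apply, ha, map_zero]
  rcases eq_or_eq_rootShift_or_eq_rootShift_rootShift ha hσa with h | h | h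
  · obtain ⟨k, rfl⟩ := exists_intCast_eq_of_isIntegral (hK ▸ Nat.prime_three) hσ
      (isIntegral_of_aeval_f ha) h
    exact absurd ha (aeval_intCast_f_ne_zero hm k)
  · exact ⟨m, a, Or.inl rfl, ha, h⟩
  · refine ⟨-m - 3, a⁻¹, Or.inr rfl, aeval_inv_f ha, ?_⟩
    rw [map_inv₀, h, rootShift_inv_rootShift_rootShift (ne_zero_of_aeval_f ha)
      (one_add_ne_zero_of_aeval_f ha)]

lemma pow_le_abs_of_root_f (hK : Module.finrank ℚ K = 3) (hσ : σ ≠ 1) (ι : K →ₐ[ℚ] ℝ)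
    (ha : aeval a (f m) = 0) (hσa : σ a = rootShift a) (hc : aeval c (f n) = 0)
    (hσc : σ c = rootShift c) {N : ℕ} (hN : (3 * (N + 2)) ^ 2 ≤ ι a) (hac : ι a < |ι c|) :
    ι a ^ N ≤ |ι c| := by
  by_contra! hlt
  obtain ⟨k, u, hprod, hne⟩ := exists_abs_mul_mul_lt_one hN hac hlt
  have hint : IsIntegral ℤ (c * a⁻¹ ^ k - u) :=
    ((isIntegral_of_aeval_f hc).mul ((isIntegral_of_aeval_f (aeval_inv_f ha)).pow k)).sub
      (isIntegral_algebraMap (x := u))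
  have hσw : σ (c * a⁻¹ ^ k - u) = rootShift c * (rootShift a)⁻¹ ^ k - u := by
    rw [map_sub, map_mul, map_pow, map_inv₀, hσa, hσc, map_intCast]
  have hσσw : σ (rootShift c * (rootShift a)⁻¹ ^ k - u) =
      rootShift (rootShift c) * (rootShift (rootShift a))⁻¹ ^ k - u := by
    rw [map_sub, map_mul, map_pow, map_inv₀, map_rootShift, map_rootShift, hσa, hσc, map_intCast]
  have hw : c * a⁻¹ ^ k - u = 0 := by
    refine eq_zero_of_abs_mul_mul_lt_one hK hσ ι hint ?_
    rw [hσw, hσσw]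
    simpa only [map_sub, map_mul, map_pow, map_inv₀, map_rootShift, map_intCast] using hprod
  apply hne
  have hw2 := congrArg ι (hσσw.symm.trans (by rw [← hσw, hw, map_zero, map_zero]))
  simpa only [map_sub, map_mul, map_pow, map_inv₀, map_rootShift, map_intCast, map_zero] using hw2

lemma norm_τ_le_pow_of_root_f (hK : Module.finrank ℚ K = 3) (hσ : σ ≠ 1) (ι : K →ₐ[ℚ] ℝ)
    (hmn : m ≠ n) (ha : aeval a (f m) = 0) (hσa : σ a = rootShift a) (hc : aeval c (f n) = 0)
    (hσc : σ c = rootShift c) (ha1 : 1 < ι a) (hm : 27 * 1138 ≤ ‖τ m‖)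
    (hcn : 3 * ‖τ n‖ ^ 2 ≤ 4 * (ι c ^ 2 + ι c + 1)) :
    ‖τ n‖ ≤ (‖τ m‖ / 27) ^ 54 := by
  obtain ⟨T, hT⟩ := exists_intCast_eq_add_add hK hσ
    ((isIntegral_of_aeval_f ha).mul (isIntegral_of_aeval_f hc))
  refine norm_τ_le_pow (T := T) (a := ι a) (c := ι c) ?_ ?_ ?_ hmn ha1 hm hcn
  · rw [aeval_algHom_apply, ha, map_zero]
  · rw [aeval_algHom_apply, hc, map_zero]
  · have hT' := congrArg ι hT
    simpa only [map_intCast, map_add, map_mul, hσa, hσc, map_rootShift] using hT'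

lemma le_of_root_f_of_root_f (hK : Module.finrank ℚ K = 3) (ι : K →ₐ[ℚ] ℝ) (hmn : m < n)
    (ha : aeval a (f m) = 0) (hc : aeval c (f n) = 0) : m ≤ 30724 := by
  by_contra! hm
  obtain ⟨σ, hσa⟩ := exists_root_f_map_eq_rootShift (by lia) ha
  have hσ : σ ≠ 1 := ne_one_of_map_eq_rootShift ι ha hσa
  obtain ⟨n', c', hn', hc', hσc'⟩ :=
    exists_root_f_or_neg_sub_three_map_eq_rootShift hK hσ (by lia) hc
  obtain ⟨r, hmr, hrm, hr⟩ := exists_real_root_f (m := m) (by lia)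
  obtain ⟨q, hq, hnq, hqn, hqq⟩ := exists_dominant_real_root_f (by lia) hn'
  obtain ⟨a₁, ha₁, hσa₁, rfl⟩ := exists_root_f_map_eq ι ha hσa hr
  obtain ⟨c₁, hc₁, hσc₁, rfl⟩ := exists_root_f_map_eq ι hc' hσc' hq
  have hmR : (30725 : ℝ) ≤ m := mod_cast hm
  have hmnR : (m : ℝ) + 1 ≤ n := mod_cast hmn
  have hτm_lower := add_one_le_norm_τ (m := m) (by lia)
  have hτm_upper := norm_τ_le_add_three (m := m) (by lia)
  have hτn_lower := add_one_le_norm_τ (m := n) (by lia)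
  have hτn : ‖τ n'‖ = ‖τ n‖ := by
    rcases hn' with rfl | rfl
    exacts [rfl, norm_τ_neg_sub_three n]
  have hpow : ι a₁ ^ 54 ≤ |ι c₁| :=
    pow_le_abs_of_root_f hK hσ ι ha₁ hσa₁ hc₁ hσc₁ (by norm_num; linarith) (by linarith)
  have hτ : ‖τ n'‖ ≤ (‖τ m‖ / 27) ^ 54 :=
    norm_τ_le_pow_of_root_f hK hσ ι (by lia) ha₁ hσa₁ hc₁ hσc₁ (by linarith) (by linarith)
      (by rw [hτn, norm_τ_sq]; nlinarith)
  refine lt_irrefl (ι a₁ ^ 54) ?_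
  calc ι a₁ ^ 54 ≤ |ι c₁| := hpow
    _ < 2 * ‖τ n'‖ := by linarith
    _ ≤ 2 * (‖τ m‖ / 27) ^ 54 := by gcongr
    _ ≤ 2 ^ 54 * (‖τ m‖ / 27) ^ 54 := by gcongr; norm_num
    _ = (2 * (‖τ m‖ / 27)) ^ 54 := (mul_pow _ _ _).symm
    _ ≤ ι a₁ ^ 54 := by
      gcongr
      linarith

end RootPairs

section SplittingField

variable {m : ℤ}

instance isSplittingField_L : (f m).IsSplittingField ℚ (L m) :=
  IntermediateField.adjoin_rootSet_isSplittingField (IsAlgClosed.splits _)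

instance finiteDimensional_L : FiniteDimensional ℚ (L m) :=
  IsSplittingField.finiteDimensional (L m) (f m)

instance isGalois_L : IsGalois ℚ (L m) :=
  have : Normal ℚ (L m) := Normal.of_isSplittingField (f m)
  {}

lemma exists_mem_L_aeval_f (m : ℤ) : ∃ x ∈ L m, aeval x (f m) = 0 := by
  have hdeg : (f m).degree ≠ 0 := by
    rw [degree_eq_natDegree (monic_f m).ne_zero, natDegree_f]
    norm_num
  obtain ⟨x, hx⟩ := IsAlgClosed.exists_aeval_eq_zero (AlgebraicClosure ℚ) (f m) hdeg
  exact ⟨x, IntermediateField.subset_adjoin _ _ (mem_rootSet.mpr ⟨(monic_f m).ne_zero, hx⟩), hx⟩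

lemma exists_aeval_f_of_L_eq {n : ℤ} (h : L m = L n) : ∃ x : L m, aeval x (f n) = 0 := by
  obtain ⟨x, hxL, hx⟩ := exists_mem_L_aeval_f n
  refine ⟨⟨x, h ▸ hxL⟩, ?_⟩
  apply (algebraMap (L m) (AlgebraicClosure ℚ)).injective
  rw [← aeval_algebraMap_apply, map_zero]
  exact hx

lemma finrank_L (hm : 0 ≤ m) : Module.finrank ℚ (L m) = 3 := by
  obtain ⟨x, hxL, hx⟩ := exists_mem_L_aeval_f m
  have hL : L m = IntermediateField.adjoin ℚ {x} := by
    refine le_antisymm (IntermediateField.adjoin_le_iff.mpr fun z hz ↦ ?_)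
      (IntermediateField.adjoin_simple_le_iff.mpr hxL)
    have hx' := IntermediateField.mem_adjoin_simple_self ℚ x
    have hshift {y : AlgebraicClosure ℚ} (hy : y ∈ IntermediateField.adjoin ℚ {x}) :
        rootShift y ∈ IntermediateField.adjoin ℚ {x} :=
      div_mem (neg_mem (one_mem _)) (add_mem (one_mem _) hy)
    rcases eq_or_eq_rootShift_or_eq_rootShift_rootShift hx (mem_rootSet.mp hz).2 with
      rfl | rfl | rfl
    exacts [hx', hshift hx', hshift (hshift hx')]
  have hmin : f m = minpoly ℚ x :=
    minpoly.eq_of_irreducible_of_monic (irreducible_f hm) hx (monic_f m)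
  rw [hL, IntermediateField.adjoin.finrank ⟨f m, monic_f m, hx⟩, ← hmin, natDegree_f]

lemma nonempty_L_algHom_real (hm : 0 ≤ m) : Nonempty (L m →ₐ[ℚ] ℝ) := by
  obtain ⟨r, -, -, hr⟩ := exists_real_root_f hm
  exact ⟨IsSplittingField.lift (L m) (f m) (splits_f hr)⟩

end SplittingField

end SimplestCubic

theorem stmt2_general {m n : ℤ} (hmn : m < n) (h : L m = L n) : m ≤ 30724 := by
  rcases lt_or_ge m 0 with hm | hm
  · exact hm.le.trans (by norm_num)
  obtain ⟨a, ha⟩ := SimplestCubic.exists_aeval_f_of_L_eq (rfl : L m = L m)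
  obtain ⟨c, hc⟩ := SimplestCubic.exists_aeval_f_of_L_eq h
  obtain ⟨ι⟩ := SimplestCubic.nonempty_L_algHom_real hm
  exact SimplestCubic.le_of_root_f_of_root_f (SimplestCubic.finrank_L hm) ι hmn ha hc

theorem stmt2 (m n : ℤ) (hm : -1 ≤ m) (hmn : m < n) (h : L m = L n) : m ≤ 35731 :=
  (stmt2_general hmn h).trans (by norm_num)
end
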